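/- Let H > 0, let Ω ⊆ ℝ² be an open connected set, and let (u_n) be a sequence of C^∞ solutions of (CMC) on Ω which is uniformly bounded on Ω (there is M with |u_n| ≤ M on Ω for all n). Then there exist a strictly increasing map φ : ℕ → ℕ and a C^∞ solution u of (CMC) on Ω such that (u_{φ(n)}) converges to u uniformly on every compact subset of Ω, together with all of its partial derivatives (C^k convergence on compact subsets for every k ∈ ℕ). -/

import Mathlib

/-!
The theorem is a compactness statement, so the work lies in interior estimates for all derivatives of
a bounded solution `u`, uniform over the family. They come in three steps, each of which is an
application of the maximum principle to an explicit function on a disk.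

* Gradient (`gradient_estimate`). On the graph of a solution, `ν = 1 / W` with `W = √(1 + |∇u|²)` is
  superharmonic, being the vertical component of the normal of a surface of constant mean curvature.
  Comparing `ν` with a large power of `η / r² + c (u - M)`, where `η` is a quadratic cut-off, bounds
  `W` at the centre of the disk.
* Curvature (`hopfSq_mem_LocBdd`). The function `f = W⁴ (H² - K)`, with `K` the Gauss curvature,
  satisfies a Simons-type inequality `L f ≥ 4 ν² f²` where it is positive (`jet_estimates`), for `L` a
  multiple of the Laplace–Beltrami operator. Since `ν` is already bounded below, a Keller–Osserman
  argument (`keller_osserman`) bounds `f`, and with it the second derivatives of `u`.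
* Higher derivatives (`interior_estimates`). A finite set of functions is called a closed system when
  the linear elliptic operator of the equation maps its members to expressions affine in their first
  derivatives. The functions `u, W, ν, u_x, u_y, u_xx, u_xy, u_yy` form one, and adding the first
  derivatives of the members of a closed system gives another. For a locally bounded closed system
  with `E₀ = ∑ f²` and `E₁ = ∑ |∇f|²`, the computation of Bernstein gives
  `L (E₁ (Λ + E₀)) ≥ E₁² - C`, so the Keller–Osserman argument bounds the gradients too, and
  induction bounds all derivatives.

With these bounds, a diagonal argument and equicontinuity give a subsequence converging with all
derivatives on compact sets (`smooth_compactness`), and the equation passes to the limit.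

The identities are proved in an arbitrary `ℝ`-algebra with two commuting derivations, applied to the
algebra `SmoothFam Ω` of sequences of smooth functions on `Ω`; uniformity in the index of the sequence
is thereby built in.
-/

open Real MeasureTheory Filter Set

noncomputable section

/-- Euclidean norm on `ℝ × ℝ`. -/
def enorm2 (p : ℝ × ℝ) : ℝ := Real.sqrt (p.1 ^ 2 + p.2 ^ 2)

/-- Partial derivative in the `x` direction. -/
def pdx (u : ℝ × ℝ → ℝ) (p : ℝ × ℝ) : ℝ := fderiv ℝ u p (1, 0)

/-- Partial derivative in the `y` direction. -/
def pdy (u : ℝ × ℝ → ℝ) (p : ℝ × ℝ) : ℝ := fderiv ℝ u p (0, 1)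

/-- The area element `W_u = √(1 + |∇u|²)`. -/
def Wgraph (u : ℝ × ℝ → ℝ) (p : ℝ × ℝ) : ℝ :=
  Real.sqrt (1 + (pdx u p) ^ 2 + (pdy u p) ^ 2)

/-- Upward unit normal of the graph of `u`. -/
def normalVec (u : ℝ × ℝ → ℝ) (p : ℝ × ℝ) : ℝ × ℝ × ℝ :=
  (-pdx u p / Wgraph u p, -pdy u p / Wgraph u p, 1 / Wgraph u p)

/-- `u` is a (C²) solution of the constant mean curvature `H` equation on `Ω`. -/
def IsCMCSolution (H : ℝ) (Ω : Set (ℝ × ℝ)) (u : ℝ × ℝ → ℝ) : Prop :=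
  ContDiffOn ℝ 2 u Ω ∧ ∀ p ∈ Ω,
    (1 + (pdy u p) ^ 2) * pdx (fun q => pdx u q) p
      - 2 * (pdx u p) * (pdy u p) * pdy (fun q => pdx u q) p
      + (1 + (pdx u p) ^ 2) * pdy (fun q => pdy u q) p
    = 2 * H * (1 + (pdx u p) ^ 2 + (pdy u p) ^ 2) ^ ((3 : ℝ) / 2)

/-- `C` is a divergence line of the sequence `u` on `Ω`. -/
def IsDivergenceLine (H : ℝ) (Ω : Set (ℝ × ℝ)) (u : ℕ → ℝ × ℝ → ℝ)
    (C : Set (ℝ × ℝ)) : Prop :=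
  ∃ z₁ : ℝ × ℝ, C ⊆ Ω ∧ (∀ q ∈ C, enorm2 (q - z₁) = 1 / (2 * H)) ∧
    IsConnected C ∧ C.Nontrivial ∧
    ∃ φ : ℕ → ℕ, StrictMono φ ∧ ∀ Q ∈ C,
      Tendsto (fun n => normalVec (u (φ n)) Q) atTop
        (nhds (2 * H * (z₁.1 - Q.1), 2 * H * (z₁.2 - Q.2), 0))

/-- `u` is a smooth (C^∞) solution of the CMC `H` equation on `Ω`. -/
def IsSmoothCMCSolution (H : ℝ) (Ω : Set (ℝ × ℝ)) (u : ℝ × ℝ → ℝ) : Prop :=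
  ContDiffOn ℝ (⊤ : ℕ∞) u Ω ∧ ∀ p ∈ Ω,
    (1 + (pdy u p) ^ 2) * pdx (fun q => pdx u q) p
      - 2 * (pdx u p) * (pdy u p) * pdy (fun q => pdx u q) p
      + (1 + (pdx u p) ^ 2) * pdy (fun q => pdy u q) p
    = 2 * H * (1 + (pdx u p) ^ 2 + (pdy u p) ^ 2) ^ ((3 : ℝ) / 2)

/-! ### Families of smooth functions and the maximum principle -/

section Families

open TopologicalSpace

/-- Extension by zero to `ℝ²` of the `n`-th member of a family of functions on `Ω`, so that
`fderiv` applies to it; on the open set `Ω` the extension has the right derivatives. -/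
def famExt (Ω : Opens (ℝ × ℝ)) (f : ℕ × Ω → ℝ) (n : ℕ) (p : ℝ × ℝ) : ℝ :=
  open Classical in if h : p ∈ Ω then f (n, ⟨p, h⟩) else 0

lemma famExt_of_mem {Ω : Opens (ℝ × ℝ)} (f : ℕ × Ω → ℝ) (n : ℕ) (p : Ω) :
    famExt Ω f n p = f (n, p) := by
  simp [famExt]

lemma famExt_add {Ω : Opens (ℝ × ℝ)} (f g : ℕ × Ω → ℝ) (n : ℕ) :
    famExt Ω (f + g) n = famExt Ω f n + famExt Ω g n := by
  funext p; by_cases h : p ∈ Ω <;> simp [famExt, h]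

lemma famExt_mul {Ω : Opens (ℝ × ℝ)} (f g : ℕ × Ω → ℝ) (n : ℕ) :
    famExt Ω (f * g) n = famExt Ω f n * famExt Ω g n := by
  funext p; by_cases h : p ∈ Ω <;> simp [famExt, h]

lemma famExt_smul {Ω : Opens (ℝ × ℝ)} (c : ℝ) (f : ℕ × Ω → ℝ) (n : ℕ) :
    famExt Ω (c • f) n = c • famExt Ω f n := by
  funext p; by_cases h : p ∈ Ω <;> simp [famExt, h]

lemma famExt_restrict {Ω : Opens (ℝ × ℝ)} (F : ℕ → ℝ × ℝ → ℝ) (n : ℕ) :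
    EqOn (famExt Ω (fun z => F z.1 z.2) n) (F n) Ω := by
  intro p hp
  simp only [famExt]
  rw [dif_pos (show p ∈ Ω from hp)]

/-- The `ℝ`-algebra of sequences of `C^∞` functions on `Ω`, encoded as functions on `ℕ × Ω`.
Treating a whole sequence as one element makes bounds uniform in `n` a statement about single
elements, and manipulations of the equation a matter of commutative algebra with derivations. -/
def SmoothFam (Ω : Opens (ℝ × ℝ)) : Subalgebra ℝ (ℕ × Ω → ℝ) where
  carrier := {f | ∀ n, ContDiffOn ℝ (⊤ : ℕ∞) (famExt Ω f n) Ω}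
  mul_mem' {f g} hf hg n := by rw [famExt_mul]; exact (hf n).mul (hg n)
  add_mem' {f g} hf hg n := by rw [famExt_add]; exact (hf n).add (hg n)
  algebraMap_mem' c n :=
    (contDiffOn_const (c := c)).congr (famExt_restrict (fun _ _ => c) n)

variable {Ω : Opens (ℝ × ℝ)}

lemma SmoothFam.contDiffOn (f : SmoothFam Ω) (n : ℕ) :
    ContDiffOn ℝ (⊤ : ℕ∞) (famExt Ω f.1 n) Ω := f.2 n

lemma SmoothFam.contDiffAt (f : SmoothFam Ω) (n : ℕ) (x : Ω) :
    ContDiffAt ℝ (⊤ : ℕ∞) (famExt Ω f.1 n) x :=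
  (f.2 n).contDiffAt (Ω.isOpen.mem_nhds x.2)

lemma SmoothFam.differentiableAt (f : SmoothFam Ω) (n : ℕ) (x : Ω) :
    DifferentiableAt ℝ (famExt Ω f.1 n) x :=
  (SmoothFam.contDiffAt f n x).differentiableAt (by simp)

/-- The element of `SmoothFam Ω` given by a sequence of functions smooth on `Ω`. -/
def SmoothFam.of (F : ℕ → ℝ × ℝ → ℝ) (hF : ∀ n, ContDiffOn ℝ (⊤ : ℕ∞) (F n) Ω) : SmoothFam Ω :=
  ⟨fun z => F z.1 z.2, fun n => (hF n).congr (famExt_restrict F n)⟩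

@[simp] lemma SmoothFam.of_apply (F : ℕ → ℝ × ℝ → ℝ) (hF : ∀ n, ContDiffOn ℝ (⊤ : ℕ∞) (F n) Ω)
    (z : ℕ × Ω) : (SmoothFam.of F hF).1 z = F z.1 z.2 := rfl

/-- The directional derivative along the constant vector `v`, as a derivation. -/
def dirDer (v : ℝ × ℝ) : Derivation ℝ (SmoothFam Ω) (SmoothFam Ω) :=
  Derivation.mk'
    { toFun := fun f => SmoothFam.of (fun n p => fderiv ℝ (famExt Ω f.1 n) p v) (fun n =>
        ((f.2 n).fderiv_of_isOpen Ω.isOpen (m := (⊤ : ℕ∞)) (by norm_cast)).clm_apply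
          contDiffOn_const)
      map_add' := by
        intro f g
        ext ⟨n, x⟩
        simp only [SmoothFam.of_apply, Subalgebra.coe_add, Pi.add_apply, famExt_add]
        rw [fderiv_add (SmoothFam.differentiableAt f n x) (SmoothFam.differentiableAt g n x)]
        rfl
      map_smul' := by
        intro c f
        ext ⟨n, x⟩
        simp only [SmoothFam.of_apply, Subalgebra.coe_smul, famExt_smul]
        rw [fderiv_const_smul (SmoothFam.differentiableAt f n x)]
        rfl }
    (by
      intro f g
      ext ⟨n, x⟩
      simp only [LinearMap.coe_mk, AddHom.coe_mk, SmoothFam.of_apply, Subalgebra.coe_mul,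
        famExt_mul, smul_eq_mul, Subalgebra.coe_add, Pi.add_apply, Pi.mul_apply]
      rw [fderiv_mul (SmoothFam.differentiableAt f n x) (SmoothFam.differentiableAt g n x)]
      simp [famExt_of_mem])

lemma dirDer_apply (v : ℝ × ℝ) (f : SmoothFam Ω) (n : ℕ) (x : Ω) :
    (dirDer v f).1 (n, x) = fderiv ℝ (famExt Ω f.1 n) x v := rfl

lemma famExt_dirDer (v : ℝ × ℝ) (f : SmoothFam Ω) (n : ℕ) :
    EqOn (famExt Ω (dirDer v f).1 n) (fun p => fderiv ℝ (famExt Ω f.1 n) p v) Ω :=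
  famExt_restrict (fun n p => fderiv ℝ (famExt Ω f.1 n) p v) n

lemma fderiv_eq_of_eqOn {f g : ℝ × ℝ → ℝ} (h : EqOn f g Ω) (x : Ω) :
    fderiv ℝ f x = fderiv ℝ g x :=
  Filter.EventuallyEq.fderiv_eq (h.eventuallyEq_of_mem (Ω.isOpen.mem_nhds x.2))

lemma dirDer_dirDer_apply (v w : ℝ × ℝ) (f : SmoothFam Ω) (n : ℕ) (x : Ω) :
    (dirDer v (dirDer w f)).1 (n, x) = fderiv ℝ (fderiv ℝ (famExt Ω f.1 n)) x v w := by
  rw [dirDer_apply, fderiv_eq_of_eqOn (famExt_dirDer w f n)]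
  have h : DifferentiableAt ℝ (fderiv ℝ (famExt Ω f.1 n)) x :=
    ((SmoothFam.contDiffAt f n x).fderiv_right (m := 1) (by norm_cast)).differentiableAt (by simp)
  rw [fderiv_clm_apply h (differentiableAt_const w)]
  simp

lemma dirDer_comm (v w : ℝ × ℝ) (f : SmoothFam Ω) :
    dirDer v (dirDer w f) = dirDer w (dirDer v f) := by
  ext ⟨n, x⟩
  rw [dirDer_dirDer_apply, dirDer_dirDer_apply]
  exact ((SmoothFam.contDiffAt f n x).isSymmSndFDerivAt (by simp only [minSmoothness_of_isRCLikeNormedField]; norm_cast)).eq v w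

/-- The partial derivative in `x`. -/
def dX : Derivation ℝ (SmoothFam Ω) (SmoothFam Ω) := dirDer (1, 0)

/-- The partial derivative in `y`. -/
def dY : Derivation ℝ (SmoothFam Ω) (SmoothFam Ω) := dirDer (0, 1)

lemma dirDer_eq (v : ℝ × ℝ) (f : SmoothFam Ω) : dirDer v f = v.1 • dX f + v.2 • dY f := by
  ext ⟨n, x⟩
  have : v = v.1 • (1, 0) + v.2 • ((0, 1) : ℝ × ℝ) := by ext <;> simp
  conv_lhs => rw [this]
  simp only [dX, dY, dirDer_apply, Subalgebra.coe_add, Subalgebra.coe_smul, Pi.add_apply, Pi.smul_apply, map_add, map_smul]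

lemma dX_dY_comm (f : SmoothFam Ω) : dX (dY f) = dY (dX f) := dirDer_comm _ _ f

/-- Evaluation of the `n`-th function of a family at the point `x`. -/
def evAt (n : ℕ) (x : Ω) : SmoothFam Ω →ₐ[ℝ] ℝ :=
  (Pi.evalAlgHom ℝ (fun _ : ℕ × Ω => ℝ) (n, x)).comp (SmoothFam Ω).val

lemma evAt_apply (n : ℕ) (x : Ω) (f : SmoothFam Ω) : evAt n x f = f.1 (n, x) := rfl

lemma second_deriv_nonpos {g : ℝ → ℝ} (hg : ContDiffAt ℝ 2 g 0) (h : IsLocalMax g 0) :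
    deriv (deriv g) 0 ≤ 0 := by
  by_contra hcon
  push Not at hcon
  have h0 : deriv g 0 = 0 := h.deriv_eq_zero
  have hmin : IsLocalMin g 0 := isLocalMin_of_deriv_deriv_pos hcon h0 hg.continuousAt
  have hc : g =ᶠ[nhds 0] fun _ => g 0 := by
    filter_upwards [h, hmin] with y h1 h2 using le_antisymm h1 h2
  have := hc.deriv.deriv_eq
  simp at this
  linarith

/-- Second derivatives along every direction are nonpositive at a local maximum. -/
lemma hess_nonpos_of_isLocalMax (h : SmoothFam Ω) (n : ℕ) (x : Ω)
    (hm : IsLocalMax (famExt Ω h.1 n) x) (v : ℝ × ℝ) :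
    evAt n x (dirDer v (dirDer v h)) ≤ 0 := by
  have hline : ∀ t : ℝ, HasDerivAt (fun t : ℝ => (x : ℝ × ℝ) + t • v) v t := fun t => by
    simpa using ((hasDerivAt_id t).smul_const v).const_add (x : ℝ × ℝ)
  have hcont : Continuous (fun t : ℝ => (x : ℝ × ℝ) + t • v) := by fun_prop
  have hev : ∀ᶠ t in nhds (0 : ℝ), (x : ℝ × ℝ) + t • v ∈ Ω := by
    apply hcont.continuousAt.eventually_mem
    simpa using Ω.isOpen.mem_nhds x.2
  have key : ∀ (f : SmoothFam Ω) (t : ℝ), (x : ℝ × ℝ) + t • v ∈ Ω →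
      deriv (fun t : ℝ => famExt Ω f.1 n ((x : ℝ × ℝ) + t • v)) t
        = famExt Ω (dirDer v f).1 n ((x : ℝ × ℝ) + t • v) := by
    intro f t ht
    rw [famExt_dirDer v f n ht]
    exact ((SmoothFam.differentiableAt f n ⟨_, ht⟩).hasFDerivAt.comp_hasDerivAt t (hline t)).deriv
  have e1 : deriv (fun t : ℝ => famExt Ω h.1 n ((x : ℝ × ℝ) + t • v)) =ᶠ[nhds 0]
      fun t => famExt Ω (dirDer v h).1 n ((x : ℝ × ℝ) + t • v) := by
    filter_upwards [hev] with t ht using key h t ht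
  have e2 := e1.deriv_eq
  rw [key _ _ (by simp [x.2])] at e2
  have e3 : famExt Ω (dirDer v (dirDer v h)).1 n ((x : ℝ × ℝ) + (0:ℝ) • v)
      = evAt n x (dirDer v (dirDer v h)) := by
    rw [zero_smul, add_zero, famExt_of_mem]; rfl
  rw [← e3, ← e2]
  apply second_deriv_nonpos
  · apply ContDiffAt.comp (g := famExt Ω h.1 n) (f := fun t : ℝ => (x : ℝ × ℝ) + t • v)
    · have := (SmoothFam.contDiffAt h n x).of_le (m := 2) (by norm_cast)
      simpa using this
    · fun_prop
  · have : Tendsto (fun t : ℝ => (x : ℝ × ℝ) + t • v) (nhds 0) (nhds (x : ℝ × ℝ)) := by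
      have := hcont.tendsto 0
      simpa using this
    have h2 := this.eventually hm
    simpa [IsLocalMax, IsMaxFilter] using h2

lemma grad_eq_zero_of_isLocalMax (h : SmoothFam Ω) (n : ℕ) (x : Ω)
    (hm : IsLocalMax (famExt Ω h.1 n) x) (v : ℝ × ℝ) :
    evAt n x (dirDer v h) = 0 := by
  rw [evAt_apply, dirDer_apply, hm.fderiv_eq_zero]; rfl

/-- A second-order operator whose coefficient matrix is positive semidefinite, with `a > 0`, is
nonpositive at a local maximum: complete the square and apply the directional statement twice. -/
lemma elliptic_nonpos_of_isLocalMax (h : SmoothFam Ω) (n : ℕ) (x : Ω)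
    (hm : IsLocalMax (famExt Ω h.1 n) x) {a b c : ℝ} (ha : 0 < a) (hd : b ^ 2 ≤ a * c) :
    a * evAt n x (dX (dX h)) + 2 * b * evAt n x (dY (dX h)) + c * evAt n x (dY (dY h)) ≤ 0 := by
  have h1 := hess_nonpos_of_isLocalMax h n x hm (a, b)
  have h2 := hess_nonpos_of_isLocalMax h n x hm (0, 1)
  simp only [dirDer_eq, map_add, Derivation.map_smul, map_smul, dX_dY_comm, smul_eq_mul,
    zero_smul, zero_add, one_smul] at h1 h2
  have h3 : 0 ≤ a * c - b ^ 2 := by linarith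
  have h4 := mul_nonpos_of_nonneg_of_nonpos h3 h2
  refine le_of_mul_le_mul_left (a := a) ?_ ha
  rw [mul_zero]
  linarith

end Families

/-! ### Jet algebra of the equation -/

section Jets


/-- A Simons-type identity for `f = W⁴(H² - K)`, `K` the Gauss curvature, at a point where
`u_y = 0`. Here `p = u_x`, `k = H / W`, `r, s, t` are the second derivatives and `uij` is
`∂_x^i ∂_y^j u`. The hypotheses are the equation, its first and second derivatives, and the
values of `f` and its derivatives. It is a polynomial identity modulo these relations. -/
lemma simons_poly (p k r s t u30 u21 u12 u03 u40 u31 u22 u13 u04 : ℝ)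
    (E : r + (1 + p^2) * t = 2 * k * (1 + p^2)^2)
    (Ex : u30 - 2 * p * s * s + 2 * p * r * t + (1 + p^2) * u12 = 6 * k * (1 + p^2) * (p * r))
    (Ey : u21 + (1 + p^2) * u03 = 6 * k * (1 + p^2) * (p * s))
    (Exx : 2 * s^2 * r + u40 - 2 * (2 * r * s + p * u21) * s - 4 * p * s * u21 + 2 * r^2 * t
      + 2 * p * u30 * t + 4 * p * r * u12 + (1 + p^2) * u22
      = 6 * k * (p * r)^2 + 6 * k * (1 + p^2) * (r^2 + p * u30 + s^2))
    (Exy : 2 * t * s * r + u31 - 2 * (r * t + s^2 + p * u12) * s - 2 * p * s * u12 - 2 * p * t * u21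
      + 2 * s * r * t + 2 * p * u21 * t + 2 * p * r * u03 + 2 * p * s * u12 + (1 + p^2) * u13
      = 6 * k * (p * r) * (p * s) + 6 * k * (1 + p^2) * (s * r + p * u21 + t * s))
    (Eyy : 2 * t^2 * r + u22 - 2 * (2 * s * t + p * u03) * s - 4 * p * t * u12 + 2 * s^2 * t
      + 2 * p * u12 * t + 4 * p * s * u03 + (1 + p^2) * u04
      = 6 * k * (p * s)^2 + 6 * k * (1 + p^2) * (s^2 + p * u12 + t^2))
    (f fx fy fxx fyy : ℝ)
    (hf : f = k^2 * (1 + p^2)^3 - (r * t - s^2))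
    (hfx : fx = 4 * k^2 * (1 + p^2)^2 * (p * r) - (u30 * t + r * u12 - 2 * s * u21))
    (hfy : fy = 4 * k^2 * (1 + p^2)^2 * (p * s) - (u21 * t + r * u03 - 2 * s * u12))
    (hfxx : fxx = 8 * k^2 * (1 + p^2) * (p * r)^2 + 4 * k^2 * (1 + p^2)^2 * (r^2 + p * u30 + s^2)
      - (u40 * t + 2 * u30 * u12 + r * u22 - 2 * u21^2 - 2 * s * u31))
    (hfyy : fyy = 8 * k^2 * (1 + p^2) * (p * s)^2 + 4 * k^2 * (1 + p^2)^2 * (s^2 + p * u12 + t^2)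
      - (u22 * t + 2 * u21 * u03 + r * u04 - 2 * u12^2 - 2 * s * u13)) :
    (1 + p^2) * (f * (fxx + (1 + p^2) * fyy - 2 * k * (1 + p^2) * p * fx) - (fx^2 + (1 + p^2) * fy^2))
     = 12 * k^2 * (1 + p^2)^3 * f^2 + 4 * f^3
      + 4 * p^2 * ((1 + p^2) * (2 * k * (1 + p^2) - t)^2 + s^2) * f^2 := by
  obtain rfl : r = 2 * k * (1 + p^2)^2 - (1 + p^2) * t := by linarith
  obtain rfl : u21 = 6 * k * (1 + p^2) * (p * s) - (1 + p^2) * u03 := by linarith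
  obtain rfl : u30 = 6 * k * (1 + p^2) * (p * (2 * k * (1 + p^2)^2 - (1 + p^2) * t))
      + 2 * p * s * s - 2 * p * (2 * k * (1 + p^2)^2 - (1 + p^2) * t) * t - (1 + p^2) * u12 := by
    linarith
  subst hf hfx hfy hfxx hfyy
  linear_combination (exp := 1)
    (1 + p^2) * (k^2 * (1 + p^2)^3 - ((2 * k * (1 + p^2)^2 - (1 + p^2) * t) * t - s^2)) *
     (- t * Exx + 2 * s * Exy - (2 * k * (1 + p^2)^2 - (1 + p^2) * t) * Eyy)

/-- The Jacobi equation for `ν = 1 / W` at a point where `u_y = 0`, up to a positive factor and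
with the symbols of `simons_poly`. -/
lemma jacobi_poly (p k r s t u30 u12 : ℝ)
    (E : r + (1 + p^2) * t = 2 * k * (1 + p^2)^2)
    (Ex : u30 - 2 * p * s * s + 2 * p * r * t + (1 + p^2) * u12 = 6 * k * (1 + p^2) * (p * r)) :
    3 * p^2 * (r^2 + (1 + p^2) * s^2) - (1 + p^2) * (r^2 + s^2 + p * u30
      + (1 + p^2) * (s^2 + t^2 + p * u12)) + 2 * k * (1 + p^2)^2 * p^2 * r
      = - (1 + p^2) * (4 * k^2 * (1 + p^2)^3 - 2 * (r * t - s^2)) := by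
  obtain rfl : r = 2 * k * (1 + p^2)^2 - (1 + p^2) * t := by linarith
  linear_combination (-(1 + p^2) * p) * Ex

section JetAlgebra
variable {R : Type*} [CommRing R] [Algebra ℝ R]

/-- Algebraic form of the equation: in an `ℝ`-algebra with commuting derivations `dx`, `dy`, the
element `W` is a square root of `1 + |∇u|²`, `ν` is its inverse (the vertical component of the unit
normal), and `u` has mean curvature `H`. -/
structure IsCMCJet (H : ℝ) (dx dy : Derivation ℝ R R) (u W ν : R) : Prop where
  comm : ∀ f, dx (dy f) = dy (dx f)
  sq : W ^ 2 = 1 + dx u ^ 2 + dy u ^ 2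
  inv : W * ν = 1
  eqn : (1 + dy u ^ 2) * dx (dx u) - 2 * (dx u * dy u * dy (dx u)) + (1 + dx u ^ 2) * dy (dy u)
    = (2 * H) • W ^ 3

/-- The linear operator `(1 + u_y²) ∂_xx - 2 u_x u_y ∂_xy + (1 + u_x²) ∂_yy`, principal part of the
equation. -/
def ellOp (dx dy : Derivation ℝ R R) (u f : R) : R :=
  (1 + dy u ^ 2) * dx (dx f) - 2 * (dx u * dy u * dy (dx f)) + (1 + dx u ^ 2) * dy (dy f)

/-- `W²` times the Laplace–Beltrami operator of the graph of a solution `u`. -/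
def lapOp (H : ℝ) (dx dy : Derivation ℝ R R) (u W f : R) : R :=
  ellOp dx dy u f - (2 * H) • (W * (dx u * dx f + dy u * dy f))

/-- `W²` times the squared norm of the gradient of `f` on the graph of `u`. -/
def gradSq (dx dy : Derivation ℝ R R) (u f : R) : R :=
  (1 + dy u ^ 2) * dx f ^ 2 - 2 * (dx u * dy u * (dx f * dy f)) + (1 + dx u ^ 2) * dy f ^ 2

/-- `W⁴ (H² - K)`, with `K` the Gauss curvature of the graph: up to the weight, the squared modulus
of the Hopf differential. -/
def hopfSq (H : ℝ) (dx dy : Derivation ℝ R R) (u : R) : R :=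
  (H ^ 2) • (1 + dx u ^ 2 + dy u ^ 2) ^ 2 - (dx (dx u) * dy (dy u) - dy (dx u) ^ 2)

variable {H : ℝ} {dx dy : Derivation ℝ R R} {u W ν : R}

lemma der_W (d : Derivation ℝ R R) (sq : W ^ 2 = 1 + dx u ^ 2 + dy u ^ 2)
    (inv : W * ν = 1) : d W = ν * (dx u * d (dx u) + dy u * d (dy u)) := by
  have h := congrArg d sq
  simp only [Derivation.leibniz_pow, map_add, Derivation.map_one_eq_zero, zero_add, smul_eq_mul,
    nsmul_eq_mul, Nat.reduceSub, pow_one, Nat.cast_ofNat] at h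
  have h2 : (algebraMap ℝ R (1/2)) * 2 = 1 := by
    rw [(map_ofNat (algebraMap ℝ R) 2).symm, ← map_mul]; norm_num
  linear_combination (algebraMap ℝ R (1/2)) * ν * h - d W * inv
    + (- W * ν * d W + ν * (dx u * d (dx u) + dy u * d (dy u))) * h2

lemma der_ν (d : Derivation ℝ R R) (sq : W ^ 2 = 1 + dx u ^ 2 + dy u ^ 2)
    (inv : W * ν = 1) : d ν = - ν ^ 3 * (dx u * d (dx u) + dy u * d (dy u)) := by
  have h := congrArg d inv
  simp only [Derivation.leibniz, Derivation.map_one_eq_zero, smul_eq_mul] at h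
  rw [der_W d sq inv] at h
  linear_combination ν * h - d ν * inv

/-- At a point where `u_y = 0`: `ν` is superharmonic, `f = hopfSq` is nonnegative, and
`f L f - |∇f|² ≥ 4 ν² f³`. The equation is differentiated twice and evaluated, which reduces the
claims to `jacobi_poly` and `simons_poly`. -/
lemma jet_at_normal_point (h : IsCMCJet H dx dy u W ν) (ev : R →ₐ[ℝ] ℝ) (hq : ev (dy u) = 0)
    (hν : 0 < ev ν) :
    ev (lapOp H dx dy u W ν) ≤ 0 ∧ 0 ≤ ev (hopfSq H dx dy u) ∧
    4 * ev ν ^ 2 * ev (hopfSq H dx dy u) ^ 3 ≤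
      ev (hopfSq H dx dy u) * ev (lapOp H dx dy u W (hopfSq H dx dy u))
        - ev (gradSq dx dy u (hopfSq H dx dy u)) := by
  have comm := h.comm
  have three : ∀ d : Derivation ℝ R R, d 3 = 0 := fun d => by
    rw [(map_ofNat (algebraMap ℝ R) 3).symm]; exact d.map_algebraMap 3
  have two : ∀ d : Derivation ℝ R R, d 2 = 0 := fun d => by
    rw [(map_ofNat (algebraMap ℝ R) 2).symm]; exact d.map_algebraMap 2
  have Ex := congrArg dx h.eqn
  have Ey := congrArg dy h.eqn
  have dsimp1 := der_W dx h.sq h.inv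
  have dsimp2 := der_W dy h.sq h.inv
  have dsimp3 := der_ν dx h.sq h.inv
  have dsimp4 := der_ν dy h.sq h.inv
  simp only [Derivation.leibniz_pow, Derivation.leibniz, map_add, map_sub, Derivation.map_smul,
    Derivation.map_one_eq_zero, zero_add, smul_eq_mul, two, three, mul_zero, add_zero, comm,
    nsmul_eq_mul, Nat.reduceSub, pow_one, Nat.cast_ofNat, dsimp1, dsimp2] at Ex Ey
  have Exx := congrArg dx Ex
  have Exy := congrArg dy Ex
  have Eyy := congrArg dy Ey
  simp only [Derivation.leibniz_pow, Derivation.leibniz, map_add, map_sub, Derivation.map_smul,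
    Derivation.map_one_eq_zero, zero_add, smul_eq_mul, comm, three, two, mul_zero, add_zero,
    nsmul_eq_mul, Nat.reduceSub, pow_one, Nat.cast_ofNat, dsimp1, dsimp2, dsimp3, dsimp4]
    at Exx Exy Eyy
  have E0 := congrArg ev h.eqn
  have W0 := congrArg ev h.sq
  have I0 := congrArg ev h.inv
  replace Ex := congrArg ev Ex
  replace Ey := congrArg ev Ey
  replace Exx := congrArg ev Exx
  replace Exy := congrArg ev Exy
  replace Eyy := congrArg ev Eyy
  simp only [map_add, map_sub, map_mul, map_pow, map_smul, map_one, map_ofNat, map_neg, hq, smul_eq_mul] at E0 W0 I0 Ex Ey Exx Exy Eyy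
  simp only [lapOp, ellOp, hopfSq, gradSq, Derivation.leibniz_pow, Derivation.leibniz, map_add, map_sub, map_neg, Derivation.map_smul,
    Derivation.map_one_eq_zero, zero_add, smul_eq_mul, comm, three, two, mul_zero, add_zero,
    nsmul_eq_mul, Nat.reduceSub, pow_one, Nat.cast_ofNat, dsimp1, dsimp2, dsimp3, dsimp4, map_mul, map_pow, map_smul, map_one, map_ofNat, hq]
  generalize ev (dx u) = p at *
  generalize ev (dx (dx u)) = r at *
  generalize ev (dy (dx u)) = s at *
  generalize ev (dy (dy u)) = t at *
  generalize ev (dx (dx (dx u))) = u30 at *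
  generalize ev (dy (dx (dx u))) = u21 at *
  generalize ev (dy (dy (dx u))) = u12 at *
  generalize ev (dy (dy (dy u))) = u03 at *
  generalize ev (dx (dx (dx (dx u)))) = u40 at *
  generalize ev (dy (dx (dx (dx u)))) = u31 at *
  generalize ev (dy (dy (dx (dx u)))) = u22 at *
  generalize ev (dy (dy (dy (dx u)))) = u13 at *
  generalize ev (dy (dy (dy (dy u)))) = u04 at *
  generalize ev ν = n at *
  generalize ev W = w at *
  obtain ⟨k, rfl⟩ : ∃ k, H = k * w := ⟨H * n, by linear_combination (-H) * I0⟩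
  have W1 : w ^ 2 = 1 + p ^ 2 := by linarith
  have n2 : n ^ 2 * (1 + p ^ 2) = 1 := by rw [← W1]; linear_combination (w * n + 1) * I0
  have e2 : k * w * (w ^ 2 * n) = k * (1 + p ^ 2) := by
    linear_combination k * w ^ 2 * I0 + k * W1
  have e3 : k * w * (w ^ 2 * n ^ 3) = k := by
    linear_combination k * (w ^ 2 * n ^ 2 + w * n + 1) * I0
  have e3' : k * w * (w * n ^ 2) = k := by
    linear_combination k * (w * n + 1) * I0
  have e4 : (k * w) ^ 2 = k ^ 2 * (1 + p ^ 2) := by linear_combination k ^ 2 * W1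
  have E : r + (1 + p^2) * t = 2 * k * (1 + p^2)^2 := by
    linear_combination E0 + 2 * k * (w ^ 2 + 1 + p ^ 2) * W1
  have Ex' : u30 - 2 * p * s * s + 2 * p * r * t + (1 + p^2) * u12
      = 6 * k * (1 + p^2) * (p * r) := by
    linear_combination Ex + 6 * (p * r) * e2
  have Ey' : u21 + (1 + p^2) * u03 = 6 * k * (1 + p^2) * (p * s) := by
    linear_combination Ey + 6 * (p * s) * e2
  have J := jacobi_poly p k r s t u30 u12 E Ex'
  have S := simons_poly p k r s t u30 u21 u12 u03 u40 u31 u22 u13 u04 E Ex' Ey'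
    (by linear_combination Exx + 6 * (r^2 + p * u30 + s^2) * e2 - 6 * (p * r) ^ 2 * e3
          + 12 * (p * r) ^ 2 * e3')
    (by linear_combination Exy + 6 * (s * r + p * u21 + t * s) * e2 - 6 * (p * r) * (p * s) * e3
          + 12 * (p * r) * (p * s) * e3')
    (by linear_combination Eyy + 6 * (s^2 + p * u12 + t^2) * e2 - 6 * (p * s) ^ 2 * e3
          + 12 * (p * s) ^ 2 * e3') _ _ _ _ _ rfl rfl rfl rfl rfl
  have fpos : 0 ≤ k^2 * (1 + p^2)^3 - (r * t - s^2) := by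
    obtain rfl : r = 2 * k * (1 + p^2)^2 - (1 + p^2) * t := by linarith
    have : 0 ≤ (1 + p^2) * (k * (1 + p^2) - t) ^ 2 + s ^ 2 := by positivity
    linarith
  refine ⟨?_, ?_, ?_⟩
  · have : 0 ≤ n ^ 3 * (2 * (k^2 * (1 + p^2)^3) + 2 * (k^2 * (1 + p^2)^3 - (r * t - s^2))) := by
      positivity
    refine le_trans (le_of_eq ?_) (neg_nonpos.2 this)
    linear_combination n ^ 5 * J
      + (n ^ 3 * (r^2 + s^2 + p * u30 + (1 + p^2) * (s^2 + t^2 + p * u12))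
        - n ^ 3 * (4 * k^2 * (1 + p^2)^3 - 2 * (r * t - s^2))
        - 2 * k * n ^ 3 * p ^ 2 * r * (1 + p ^ 2)) * n2 + 2 * k * n ^ 3 * p ^ 2 * r * W1
  · refine fpos.trans (le_of_eq ?_)
    linear_combination (- (1 + p ^ 2) ^ 2) * e4
  · have hk : k * w * w = k * (1 + p ^ 2) := by linear_combination k * W1
    have e5 : ∀ z, 2 * (k * w) * (w * z) = 2 * (k * (1 + p ^ 2)) * z := fun z => by
      linear_combination 2 * z * hk
    rw [e4, e5]
    generalize hf : k^2 * (1 + p^2)^3 - (r * t - s^2) = f at *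
    have hf' : k^2 * (1 + p^2) * (1 + p^2 + 0 ^ 2) ^ 2 - (r * t - s^2) = f := by
      rw [← hf]; ring
    rw [hf']
    have hpos : 0 ≤ n ^ 2 * (12 * k^2 * (1 + p^2)^3 * f^2
      + 4 * p^2 * ((1 + p^2) * (2 * k * (1 + p^2) - t)^2 + s^2) * f^2) := by positivity
    rw [← sub_nonneg]
    refine hpos.trans (le_of_eq ?_)
    have S' := congrArg (fun z => n ^ 2 * z) S
    simp only [← mul_assoc, n2] at S'
    linear_combination -S'
end JetAlgebra

end Jets

/-! ### Rotation invariance -/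

section Rotation

open TopologicalSpace
section JetRotation
variable {R : Type*} [CommRing R] [Algebra ℝ R]
variable {H : ℝ} {dx dy : Derivation ℝ R R} {u W ν : R}

lemma rot_aux (c s : ℝ) (hcs : c ^ 2 + s ^ 2 = 1) :
    (algebraMap ℝ R c) ^ 2 + (algebraMap ℝ R s) ^ 2 = 1 := by
  rw [← map_pow, ← map_pow, ← map_add, hcs, map_one]

lemma ellOp_rotate (comm : ∀ f, dx (dy f) = dy (dx f)) (c s : ℝ) (hcs : c ^ 2 + s ^ 2 = 1) (f : R) :
    ellOp (c • dx + s • dy) (-s • dx + c • dy) u f = ellOp dx dy u f := by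
  have h := rot_aux (R := R) c s hcs
  simp only [ellOp, Derivation.add_apply, Derivation.smul_apply, map_add, Derivation.map_smul, comm]
  simp only [Algebra.smul_def, map_neg]
  generalize algebraMap ℝ R c = c at *
  generalize algebraMap ℝ R s = s at *
  linear_combination ((c ^ 2 + s ^ 2 + 1) * (dy u ^ 2 * dx (dx f) - 2 * (dx u * dy u * dy (dx f)) + dx u ^ 2 * dy (dy f)) + dx (dx f) + dy (dy f)) * h

lemma lapOp_rotate (comm : ∀ f, dx (dy f) = dy (dx f)) (c s : ℝ) (hcs : c ^ 2 + s ^ 2 = 1) (f : R) :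
    lapOp H (c • dx + s • dy) (-s • dx + c • dy) u W f = lapOp H dx dy u W f := by
  have h := rot_aux (R := R) c s hcs
  rw [lapOp, lapOp, ellOp_rotate comm c s hcs]
  congr 3
  simp only [Derivation.add_apply, Derivation.smul_apply, Algebra.smul_def, map_neg]
  linear_combination (dx u * dx f + dy u * dy f) * h

lemma gradSq_rotate (c s : ℝ) (hcs : c ^ 2 + s ^ 2 = 1) (f : R) :
    gradSq (c • dx + s • dy) (-s • dx + c • dy) u f = gradSq dx dy u f := by
  have h := rot_aux (R := R) c s hcs
  simp only [gradSq, Derivation.add_apply, Derivation.smul_apply, Algebra.smul_def, map_neg]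
  generalize algebraMap ℝ R c = c at *
  generalize algebraMap ℝ R s = s at *
  linear_combination ((c ^ 2 + s ^ 2 + 1) * (dy u ^ 2 * dx f ^ 2 - 2 * (dx u * dy u * (dx f * dy f)) + dx u ^ 2 * dy f ^ 2) + dx f ^ 2 + dy f ^ 2) * h

lemma sq_rotate (c s : ℝ) (hcs : c ^ 2 + s ^ 2 = 1) :
    (1 + (c • dx + s • dy) u ^ 2 + (-s • dx + c • dy) u ^ 2) = 1 + dx u ^ 2 + dy u ^ 2 := by
  have h := rot_aux (R := R) c s hcs
  simp only [Derivation.add_apply, Derivation.smul_apply, Algebra.smul_def, map_neg]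
  linear_combination (dx u ^ 2 + dy u ^ 2) * h

lemma hopfSq_rotate (comm : ∀ f, dx (dy f) = dy (dx f)) (c s : ℝ) (hcs : c ^ 2 + s ^ 2 = 1) :
    hopfSq H (c • dx + s • dy) (-s • dx + c • dy) u = hopfSq H dx dy u := by
  have h := rot_aux (R := R) c s hcs
  rw [hopfSq, hopfSq, sq_rotate c s hcs]
  congr 1
  simp only [Derivation.add_apply, Derivation.smul_apply, map_add, Derivation.map_smul, comm]
  simp only [Algebra.smul_def, map_neg]
  generalize algebraMap ℝ R c = c at *
  generalize algebraMap ℝ R s = s at *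
  linear_combination (c ^ 2 + s ^ 2 + 1) * (dx (dx u) * dy (dy u) - dy (dx u) ^ 2) * h

lemma IsCMCJet.rotate (hj : IsCMCJet H dx dy u W ν) (c s : ℝ) (hcs : c ^ 2 + s ^ 2 = 1) :
    IsCMCJet H (c • dx + s • dy) (-s • dx + c • dy) u W ν where
  comm f := by
    simp only [Derivation.add_apply, Derivation.smul_apply, map_add, Derivation.map_smul, hj.comm]
    module
  sq := by rw [sq_rotate c s hcs, hj.sq]
  inv := hj.inv
  eqn := by
    rw [← hj.eqn]
    exact ellOp_rotate hj.comm c s hcs u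

/-- The conclusions of `jet_at_normal_point` at every point: the operators are invariant under
rotations of the plane, and a rotation achieves `u_y = 0` at the given point. -/
lemma jet_estimates (h : IsCMCJet H dx dy u W ν) (ev : R →ₐ[ℝ] ℝ) (hν : 0 < ev ν) :
    ev (lapOp H dx dy u W ν) ≤ 0 ∧ 0 ≤ ev (hopfSq H dx dy u) ∧
    4 * ev ν ^ 2 * ev (hopfSq H dx dy u) ^ 3 ≤
      ev (hopfSq H dx dy u) * ev (lapOp H dx dy u W (hopfSq H dx dy u))
        - ev (gradSq dx dy u (hopfSq H dx dy u)) := by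
  obtain ⟨c, s, hcs, hq⟩ : ∃ c s : ℝ, c ^ 2 + s ^ 2 = 1 ∧ -s * ev (dx u) + c * ev (dy u) = 0 := by
    by_cases h0 : ev (dx u) ^ 2 + ev (dy u) ^ 2 = 0
    · have h1 : ev (dy u) = 0 := by nlinarith [sq_nonneg (ev (dx u)), sq_nonneg (ev (dy u))]
      exact ⟨1, 0, by norm_num, by simp [h1]⟩
    · have hpos : 0 < ev (dx u) ^ 2 + ev (dy u) ^ 2 := lt_of_le_of_ne (by positivity) (Ne.symm h0)
      refine ⟨ev (dx u) / √(ev (dx u) ^ 2 + ev (dy u) ^ 2),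
        ev (dy u) / √(ev (dx u) ^ 2 + ev (dy u) ^ 2), ?_, by ring⟩
      rw [div_pow, div_pow, Real.sq_sqrt hpos.le]
      field_simp
  have := jet_at_normal_point (h.rotate c s hcs) ev
    (by simpa [Derivation.add_apply, Derivation.smul_apply] using hq) hν
  rwa [lapOp_rotate h.comm c s hcs, hopfSq_rotate h.comm c s hcs, lapOp_rotate h.comm c s hcs,
    gradSq_rotate c s hcs] at this

end JetRotation

end Rotation

/-! ### Disks, cut-off functions and the Keller–Osserman bound -/

section KellerOsserman

open TopologicalSpace
variable {Ω : Opens (ℝ × ℝ)}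

/-- The first coordinate function. -/
def cX : SmoothFam Ω := SmoothFam.of (fun _ p => p.1) (fun _ => contDiff_fst.contDiffOn)

/-- The second coordinate function. -/
def cY : SmoothFam Ω := SmoothFam.of (fun _ p => p.2) (fun _ => contDiff_snd.contDiffOn)

lemma evAt_cX (n : ℕ) (x : Ω) : evAt n x cX = (x : ℝ × ℝ).1 := rfl
lemma evAt_cY (n : ℕ) (x : Ω) : evAt n x cY = (x : ℝ × ℝ).2 := rfl

lemma dirDer_of (v : ℝ × ℝ) (F : ℕ → ℝ × ℝ → ℝ) (hF : ∀ n, ContDiffOn ℝ (⊤ : ℕ∞) (F n) Ω)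
    (n : ℕ) (x : Ω) : evAt n x (dirDer v (SmoothFam.of F hF)) = fderiv ℝ (F n) x v := by
  rw [evAt_apply, dirDer_apply]
  exact congrArg (· v) (fderiv_eq_of_eqOn (famExt_restrict F n) x)

lemma SmoothFam.ext_ev {f g : SmoothFam Ω} (h : ∀ n x, evAt n x f = evAt n x g) : f = g := by
  ext ⟨n, x⟩
  exact h n x

lemma dX_cX : dX (cX : SmoothFam Ω) = 1 := SmoothFam.ext_ev fun n x => by
  rw [dX, cX, dirDer_of]; simp [fderiv_fst]
lemma dY_cX : dY (cX : SmoothFam Ω) = 0 := SmoothFam.ext_ev fun n x => by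
  rw [dY, cX, dirDer_of]; simp [fderiv_fst]
lemma dX_cY : dX (cY : SmoothFam Ω) = 0 := SmoothFam.ext_ev fun n x => by
  rw [dX, cY, dirDer_of]; simp [fderiv_snd]
lemma dY_cY : dY (cY : SmoothFam Ω) = 1 := SmoothFam.ext_ev fun n x => by
  rw [dY, cY, dirDer_of]; simp [fderiv_snd]

/-- The closed Euclidean disk; the metric of `ℝ × ℝ` is the sup metric, whose balls are squares. -/
def disk (x₀ : ℝ × ℝ) (r : ℝ) : Set (ℝ × ℝ) := {x | (x.1 - x₀.1) ^ 2 + (x.2 - x₀.2) ^ 2 ≤ r ^ 2}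

lemma disk_subset_closedBall (x₀ : ℝ × ℝ) {r : ℝ} (hr : 0 ≤ r) : disk x₀ r ⊆ Metric.closedBall x₀ r := by
  intro x hx
  simp only [disk, mem_ofPred_eq] at hx
  rw [Metric.mem_closedBall, Prod.dist_eq, Real.dist_eq, Real.dist_eq]
  exact max_le (abs_le_of_sq_le_sq (by nlinarith [sq_nonneg (x.2 - x₀.2)]) hr)
    (abs_le_of_sq_le_sq (by nlinarith [sq_nonneg (x.1 - x₀.1)]) hr)

lemma isCompact_disk (x₀ : ℝ × ℝ) {r : ℝ} (hr : 0 ≤ r) : IsCompact (disk x₀ r) := by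
  refine (isCompact_closedBall x₀ r).of_isClosed_subset ?_ (disk_subset_closedBall x₀ hr)
  exact isClosed_le (by fun_prop) continuous_const

/-- The cut-off function `r² - |x - x₀|²`, positive exactly inside the disk. -/
def eta (x₀ : ℝ × ℝ) (r : ℝ) : SmoothFam Ω :=
  algebraMap ℝ _ (r ^ 2) - (cX - algebraMap ℝ _ x₀.1) ^ 2 - (cY - algebraMap ℝ _ x₀.2) ^ 2

lemma ev_eta (x₀ : ℝ × ℝ) (r : ℝ) (n : ℕ) (x : Ω) : evAt n x (eta x₀ r) =
    r ^ 2 - ((x : ℝ × ℝ).1 - x₀.1) ^ 2 - ((x : ℝ × ℝ).2 - x₀.2) ^ 2 := by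
  simp only [eta, map_sub, map_pow, evAt_cX, evAt_cY, AlgHom.commutes, Algebra.algebraMap_self, RingHom.id_apply]

lemma dX_eta (x₀ : ℝ × ℝ) (r : ℝ) : dX (eta x₀ r : SmoothFam Ω) =
    - (2 * (cX - algebraMap ℝ _ x₀.1)) := by
  simp [eta, Derivation.leibniz_pow, dX_cX, dX_cY, -map_pow, Derivation.map_algebraMap]
lemma dY_eta (x₀ : ℝ × ℝ) (r : ℝ) : dY (eta x₀ r : SmoothFam Ω) =
    - (2 * (cY - algebraMap ℝ _ x₀.2)) := by
  simp [eta, Derivation.leibniz_pow, dY_cX, dY_cY, -map_pow, Derivation.map_algebraMap]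

lemma ev_dX_eta (x₀ : ℝ × ℝ) (r : ℝ) (n : ℕ) (x : Ω) : evAt n x (dX (eta x₀ r)) =
    -2 * ((x : ℝ × ℝ).1 - x₀.1) := by
  rw [dX_eta]; simp [evAt_cX, map_ofNat]
lemma ev_dY_eta (x₀ : ℝ × ℝ) (r : ℝ) (n : ℕ) (x : Ω) : evAt n x (dY (eta x₀ r)) =
    -2 * ((x : ℝ × ℝ).2 - x₀.2) := by
  rw [dY_eta]; simp [evAt_cY, map_ofNat]

lemma der_two (d : Derivation ℝ (SmoothFam Ω) (SmoothFam Ω)) : d 2 = 0 := by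
  rw [(map_ofNat (algebraMap ℝ (SmoothFam Ω)) 2).symm]; exact d.map_algebraMap 2

lemma ev_dXdX_eta (x₀ : ℝ × ℝ) (r : ℝ) (n : ℕ) (x : Ω) : evAt n x (dX (dX (eta x₀ r))) = -2 := by
  rw [dX_eta]; simp [Derivation.leibniz, der_two, Derivation.map_algebraMap, dX_cX, map_ofNat]
lemma ev_dYdX_eta (x₀ : ℝ × ℝ) (r : ℝ) (n : ℕ) (x : Ω) : evAt n x (dY (dX (eta x₀ r))) = 0 := by
  rw [dX_eta]; simp [Derivation.leibniz, der_two, Derivation.map_algebraMap, dY_cX, map_ofNat]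
lemma ev_dYdY_eta (x₀ : ℝ × ℝ) (r : ℝ) (n : ℕ) (x : Ω) : evAt n x (dY (dY (eta x₀ r))) = -2 := by
  rw [dY_eta]; simp [Derivation.leibniz, der_two, Derivation.map_algebraMap, dY_cY, map_ofNat]

/-- A maximum over the disk attained where `eta > 0` is an interior one. -/
lemma isLocalMax_of_disk (h : SmoothFam Ω) (n : ℕ) (x₀ : ℝ × ℝ) (r : ℝ) (x : Ω)
    (hx : 0 < evAt n x (eta x₀ r))
    (hm : ∀ y : Ω, (y : ℝ × ℝ) ∈ disk x₀ r → evAt n y h ≤ evAt n x h) :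
    IsLocalMax (famExt Ω h.1 n) x := by
  rw [ev_eta] at hx
  have ho : IsOpen {y : ℝ × ℝ | 0 < r ^ 2 - (y.1 - x₀.1) ^ 2 - (y.2 - x₀.2) ^ 2} :=
    isOpen_lt continuous_const (by fun_prop)
  filter_upwards [ho.mem_nhds hx, Ω.isOpen.mem_nhds x.2] with y hy hyΩ
  have := hm ⟨y, hyΩ⟩ (by simp only [disk, mem_ofPred_eq] at hy ⊢; linarith)
  rw [famExt_of_mem h.1 n x]
  exact (famExt_of_mem h.1 n ⟨y, hyΩ⟩).trans_le this

lemma exists_max_disk (g : SmoothFam Ω) (n : ℕ) (x₀ : ℝ × ℝ) {r : ℝ} (hr : 0 < r)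
    (hD : disk x₀ r ⊆ Ω) :
    ∃ x : Ω, (x : ℝ × ℝ) ∈ disk x₀ r ∧ ∀ y : Ω, (y : ℝ × ℝ) ∈ disk x₀ r → evAt n y g ≤ evAt n x g := by
  obtain ⟨x, hx, hm⟩ := (isCompact_disk x₀ hr.le).exists_isMaxOn
    (f := famExt Ω g.1 n) ⟨x₀, by simp [disk]; positivity⟩
    ((SmoothFam.contDiffOn g n).continuousOn.mono hD)
  refine ⟨⟨x, hD hx⟩, hx, fun y hy => ?_⟩
  have := hm hy
  simp only [mem_ofPred_eq] at this
  rw [famExt_of_mem g.1 n y] at this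
  exact this.trans_eq (famExt_of_mem g.1 n ⟨x, hD hx⟩)

set_option maxHeartbeats 1000000 in
/-- The inequality between real numbers obtained at an interior maximum of `η² F`, where `X`, `Y`
are the coordinates relative to the centre: `gx`, `gy` express that the gradient vanishes, `hell`
the sign of the second-order part, and `hLf` the differential inequality for `F`. -/
lemma ko_real {r A κ C B η X Y F Fxx Fxy Fyy Fx Fy a b c d e : ℝ}
    (hr : 0 < r) (hA : 0 ≤ A) (hκ : 0 < κ) (hC : 0 ≤ C)
    (hBd : B = 56 * A * r ^ 2 + 8 * r ^ 3 * A) (hη : 0 < η) (hηr : η ≤ r ^ 2)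
    (hx : X ^ 2 + Y ^ 2 ≤ r ^ 2) (hfx : 0 < F) (ha : 0 < a) (hbac : b ^ 2 ≤ a * c)
    (haA : a ≤ A) (hcA : c ≤ A) (hdA : |d| ≤ A) (heA : |e| ≤ A)
    (gx : η * Fx = 4 * F * X) (gy : η * Fy = 4 * F * Y)
    (hell : a * (η ^ 2 * Fxx - 24 * X ^ 2 * F - 4 * η * F)
      + 2 * b * (η ^ 2 * Fxy - 24 * X * Y * F) + c * (η ^ 2 * Fyy - 24 * Y ^ 2 * F - 4 * η * F) ≤ 0)
    (hLf : κ * F ^ 2 - C ≤ a * Fxx + 2 * b * Fxy + c * Fyy + d * Fx + e * Fy) :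
    η ^ 2 * F ≤ 1 + (B + r ^ 8 * C) / κ := by
  have hB : 0 ≤ B := by rw [hBd]; positivity
  have hc : 0 ≤ c := by nlinarith [sq_nonneg b]
  have hX : |X| ≤ r := abs_le_of_sq_le_sq (by nlinarith [sq_nonneg Y]) hr.le
  have hY : |Y| ≤ r := abs_le_of_sq_le_sq (by nlinarith [sq_nonneg X]) hr.le
  have key : η ^ 2 * (a * Fxx + 2 * b * Fxy + c * Fyy + d * Fx + e * Fy)
      ≤ F * (24 * (a * X ^ 2 + 2 * b * X * Y + c * Y ^ 2) + 4 * η * (a + c)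
        + 4 * η * (d * X + e * Y)) := by
    have i1 : η ^ 2 * (d * Fx + e * Fy) = 4 * F * η * (d * X + e * Y) := by
      linear_combination η * d * gx + η * e * gy
    linarith
  have hq : a * X ^ 2 + 2 * b * X * Y + c * Y ^ 2 ≤ 2 * A * r ^ 2 := by
    have : 0 ≤ a * (c * X ^ 2 - 2 * b * X * Y + a * Y ^ 2) := by
      nlinarith [sq_nonneg (b * X - a * Y), sq_nonneg X]
    have := nonneg_of_mul_nonneg_right this ha
    nlinarith
  have hdX : d * X ≤ A * r := by
    calc d * X ≤ |d * X| := le_abs_self _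
      _ = |d| * |X| := abs_mul _ _
      _ ≤ A * r := by gcongr
  have heY : e * Y ≤ A * r := by
    calc e * Y ≤ |e * Y| := le_abs_self _
      _ = |e| * |Y| := abs_mul _ _
      _ ≤ A * r := by gcongr
  have hB' : 24 * (a * X ^ 2 + 2 * b * X * Y + c * Y ^ 2) + 4 * η * (a + c)
        + 4 * η * (d * X + e * Y) ≤ B := by
    have : 4 * η * (a + c) ≤ 4 * r ^ 2 * (A + A) := by gcongr
    have h2 : 4 * η * (d * X + e * Y) ≤ 4 * η * (A * r + A * r) := by gcongr
    have h3 : 4 * η * (A * r + A * r) ≤ 4 * r ^ 2 * (A * r + A * r) := by gcongr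
    rw [hBd]
    linarith
  set m := η ^ 2 * F
  have hfin : κ * m ^ 2 ≤ m * B + r ^ 8 * C := by
    have h1 : η ^ 2 * (κ * F ^ 2 - C) ≤ F * B :=
      (mul_le_mul_of_nonneg_left hLf (by positivity)).trans
        (key.trans (mul_le_mul_of_nonneg_left hB' hfx.le))
    have h2 := mul_le_mul_of_nonneg_left h1 (sq_nonneg η)
    have h3 : η ^ 4 ≤ (r ^ 2) ^ 4 := by gcongr
    have h4 := mul_le_mul_of_nonneg_right h3 hC
    simp only [m]
    linarith
  have hmm : m ≤ (1 + (B + r ^ 8 * C) / κ) := by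
    by_contra hcon
    push Not at hcon
    have hm1 : 1 ≤ m := by
      have : 0 ≤ (B + r ^ 8 * C) / κ := by positivity
      linarith
    have : κ * (1 + (B + r ^ 8 * C) / κ) = κ + (B + r ^ 8 * C) := by field_simp
    have h5 : κ * m * m ≤ (B + r ^ 8 * C) * m := by nlinarith [pow_pos hr 8, mul_nonneg (pow_pos hr 8).le hC]
    have h6 := le_of_mul_le_mul_right h5 (by linarith)
    nlinarith
  exact hmm

set_option maxHeartbeats 1000000 in
/-- A Keller–Osserman bound: if `L f ≥ κ f² - C` wherever `f > 0` in a disk of radius `r`, for an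
elliptic `L` with coefficients bounded by `A`, then `f` is bounded above at the centre by a constant
depending only on `r, A, κ, C`. The maximum principle is applied to `η² f`. -/
lemma keller_osserman (r A κ C : ℝ) (hr : 0 < r) (hA : 0 ≤ A) (hκ : 0 < κ) (hC : 0 ≤ C) :
    ∃ C' : ℝ, ∀ (n : ℕ) (x₀ : Ω) (f : SmoothFam Ω) (a b c d e : Ω → ℝ), disk x₀ r ⊆ Ω →
      (∀ x : Ω, (x : ℝ × ℝ) ∈ disk x₀ r → 0 < a x ∧ b x ^ 2 ≤ a x * c x ∧ a x ≤ A ∧ c x ≤ A ∧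
        |d x| ≤ A ∧ |e x| ≤ A) →
      (∀ x : Ω, (x : ℝ × ℝ) ∈ disk x₀ r → 0 < evAt n x f →
        κ * evAt n x f ^ 2 - C ≤ a x * evAt n x (dX (dX f)) + 2 * b x * evAt n x (dY (dX f))
          + c x * evAt n x (dY (dY f)) + d x * evAt n x (dX f) + e x * evAt n x (dY f)) →
      evAt n x₀ f ≤ C' := by
  set B : ℝ := 56 * A * r ^ 2 + 8 * r ^ 3 * A
  have hB : 0 ≤ B := by positivity
  set m₀ : ℝ := 1 + (B + r ^ 8 * C) / κ
  have hm₀ : 0 ≤ m₀ := by positivity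
  refine ⟨m₀ / r ^ 4, fun n x₀ f a b c d e hD hco hf => ?_⟩
  by_cases h0 : evAt n x₀ f ≤ 0
  · exact h0.trans (by positivity)
  push Not at h0
  obtain ⟨x, hx, hm⟩ := exists_max_disk (eta x₀ r ^ 2 * f) n x₀ hr hD
  have hη0 : evAt n x₀ (eta x₀ r) = r ^ 2 := by rw [ev_eta]; ring
  have hx₀ := hm x₀ (by simp [disk]; positivity)
  simp only [map_mul, map_pow, hη0] at hx₀
  have hηnn : 0 ≤ evAt n x (eta x₀ r) := by
    rw [ev_eta]; simp only [disk, mem_ofPred_eq] at hx; linarith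
  have hpos : 0 < evAt n x (eta x₀ r) ^ 2 * evAt n x f := lt_of_lt_of_le (by positivity) hx₀
  have hη : 0 < evAt n x (eta x₀ r) := by
    rcases hηnn.eq_or_lt with h | h
    · rw [← h] at hpos; simp at hpos
    · exact h
  have hfx : 0 < evAt n x f := by
    by_contra hcon
    nlinarith [sq_nonneg (evAt n x (eta x₀ r))]
  have hloc := isLocalMax_of_disk _ n x₀ r x hη hm
  obtain ⟨ha, hbac, haA, hcA, hdA, heA⟩ := hco x hx
  have hell := elliptic_nonpos_of_isLocalMax _ n x hloc ha hbac
  have hgx := grad_eq_zero_of_isLocalMax _ n x hloc (1, 0)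
  have hgy := grad_eq_zero_of_isLocalMax _ n x hloc (0, 1)
  change evAt n x (dX _) = 0 at hgx
  change evAt n x (dY _) = 0 at hgy
  have hLf := hf x hx hfx
  have e1 := ev_dX_eta x₀ r n x
  have e2 := ev_dY_eta x₀ r n x
  have e0 := ev_eta x₀ r n x
  simp only [Derivation.leibniz_pow, Derivation.leibniz, map_add, smul_eq_mul, nsmul_eq_mul,
    Nat.reduceSub, pow_one, Nat.cast_ofNat, der_two, mul_zero, add_zero, map_mul, map_pow,
    map_ofNat, ev_dXdX_eta, ev_dYdX_eta, ev_dYdY_eta, e1, e2] at hell hgx hgy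
  simp only [disk, mem_ofPred_eq] at hx
  have hηr : evAt n x (eta x₀ r) ≤ r ^ 2 := by
    rw [e0]; nlinarith [sq_nonneg ((x : ℝ × ℝ).1 - (x₀ : ℝ × ℝ).1), sq_nonneg ((x : ℝ × ℝ).2 - (x₀ : ℝ × ℝ).2)]
  clear e0 e1 e2 hη0 hloc hf hm hco
  generalize evAt n x (eta x₀ r) = η at *
  generalize (x : ℝ × ℝ).1 - (x₀ : ℝ × ℝ).1 = X at *
  generalize (x : ℝ × ℝ).2 - (x₀ : ℝ × ℝ).2 = Y at *
  generalize evAt n x f = F at *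
  generalize evAt n x (dX (dX f)) = Fxx at *
  generalize evAt n x (dY (dX f)) = Fxy at *
  generalize evAt n x (dY (dY f)) = Fyy at *
  generalize evAt n x (dX f) = Fx at *
  generalize evAt n x (dY f) = Fy at *
  generalize evAt n x₀ f = F0 at *
  generalize a x = a at *
  generalize b x = b at *
  generalize c x = c at *
  generalize d x = d at *
  generalize e x = e at *
  have gx : η * Fx = 4 * F * X := by
    refine mul_left_cancel₀ hη.ne' ?_; linarith
  have gy : η * Fy = 4 * F * Y := by
    refine mul_left_cancel₀ hη.ne' ?_; linarith
  have hko : η ^ 2 * F ≤ m₀ := ko_real hr hA hκ hC rfl hη hηr hx hfx ha hbac haA hcA hdA heA gx gy (by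
    refine le_trans (le_of_eq ?_) hell
    linear_combination (8 * X * a + 8 * b * Y) * gx + (8 * X * b + 8 * c * Y) * gy) hLf
  rw [le_div_iff₀ (by positivity)]
  linarith

end KellerOsserman

/-! ### Interior gradient estimate -/

section Gradient

open TopologicalSpace

section OpAlgebra
variable {R : Type*} [CommRing R] [Algebra ℝ R]
variable {H : ℝ} {dx dy : Derivation ℝ R R} {u W ν : R}

lemma lapOp_sub_smul (f g : R) (m : ℝ) :
    lapOp H dx dy u W (f - m • g) = lapOp H dx dy u W f - m • lapOp H dx dy u W g := by
  simp only [lapOp, ellOp, map_sub, Derivation.map_smul]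
  simp only [Algebra.smul_def]
  ring

lemma lapOp_add_smul (f g : R) (m l : ℝ) :
    lapOp H dx dy u W (l • f + m • g) = l • lapOp H dx dy u W f + m • lapOp H dx dy u W g := by
  simp only [lapOp, ellOp, map_add, Derivation.map_smul]
  simp only [Algebra.smul_def]
  ring

lemma lapOp_pow (f : R) (K : ℕ) :
    lapOp H dx dy u W (f ^ (K + 2)) =
      ((K : R) + 2) * f ^ K * (f * lapOp H dx dy u W f + ((K : R) + 1) * gradSq dx dy u f) := by
  have hN : ∀ d : Derivation ℝ R R, d ((K : R) + 2) = 0 := fun d => by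
    have : ((K : R) + 2) = algebraMap ℝ R ((K : ℝ) + 2) := by
      rw [map_add, map_natCast, map_ofNat]
    rw [this]; exact d.map_algebraMap _
  have h1 : ∀ d : Derivation ℝ R R, d (f ^ (K + 2)) = ((K : R) + 2) * (f ^ (K + 1) * d f) := by
    intro d
    rw [Derivation.leibniz_pow]; simp
  have h2 : ∀ d : Derivation ℝ R R, d (f ^ (K + 1)) = ((K : R) + 1) * (f ^ K * d f) := by
    intro d
    rw [Derivation.leibniz_pow]; simp
  simp only [lapOp, ellOp, gradSq, h1, h2, hN, Derivation.leibniz, smul_eq_mul, mul_zero, add_zero]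
  simp only [Algebra.smul_def]
  ring

/-- The equation, in terms of `lapOp`. -/
lemma lapOp_self (h : IsCMCJet H dx dy u W ν) : lapOp H dx dy u W u = (2 * H) • W := by
  have h1 : ellOp dx dy u u = _ := h.eqn
  rw [lapOp, h1]
  simp only [Algebra.smul_def]
  linear_combination (algebraMap ℝ R (2 * H)) * W * h.sq
end OpAlgebra

variable {Ω : Opens (ℝ × ℝ)} {H : ℝ} {u W ν : SmoothFam Ω}

lemma ellOp_nonpos_of_isLocalMax (h : SmoothFam Ω) (n : ℕ) (x : Ω)
    (hm : IsLocalMax (famExt Ω h.1 n) x) : evAt n x (ellOp (R := SmoothFam Ω) dX dY u h) ≤ 0 := by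
  have := elliptic_nonpos_of_isLocalMax h n x hm (a := 1 + evAt n x (dY u) ^ 2)
    (b := - (evAt n x (dX u) * evAt n x (dY u))) (c := 1 + evAt n x (dX u) ^ 2) (by positivity)
    (by nlinarith [sq_nonneg (evAt n x (dX u)), sq_nonneg (evAt n x (dY u))])
  refine le_trans (le_of_eq ?_) this
  simp only [ellOp, map_add, map_sub, map_mul, map_pow, map_one, map_ofNat]
  ring

lemma lapOp_nonpos_of_isLocalMax (h : SmoothFam Ω) (n : ℕ) (x : Ω)
    (hm : IsLocalMax (famExt Ω h.1 n) x) : evAt n x (lapOp (R := SmoothFam Ω) H dX dY u W h) ≤ 0 := by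
  have h1 : evAt n x (dX h) = 0 := grad_eq_zero_of_isLocalMax h n x hm (1, 0)
  have h2 : evAt n x (dY h) = 0 := grad_eq_zero_of_isLocalMax h n x hm (0, 1)
  have := ellOp_nonpos_of_isLocalMax (u := u) h n x hm
  simpa [lapOp, h1, h2] using this

set_option maxHeartbeats 1000000 in
/-- The inequality between real numbers behind the gradient estimate. At the maximum point,
`hmax` is what the maximum principle gives for `φ = η / r² + c (u - M)`; for large `w` the term
`(K + 1) gφ`, of size at least `(K + 1) c² w² / 8`, beats `φ Lφ ≥ - (4 / r² + 4 H / r) w²`. -/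
lemma gradient_real {r H c X Y p q w Lφ gφ φ : ℝ} {K : ℕ} (hr : 0 < r) (hH : 0 < H) (hc : 0 < c)
    (hw : w ^ 2 = 1 + p ^ 2 + q ^ 2) (hw0 : 0 < w) (hXY : X ^ 2 + Y ^ 2 ≤ r ^ 2)
    (hφ : 0 < φ) (hφ1 : φ ≤ 1)
    (hL : Lφ = (1 / r ^ 2) * (-2 * (1 + q ^ 2) - 2 * (1 + p ^ 2) + 4 * H * w * (p * X + q * Y))
      + c * (2 * H * w))
    (hg : gφ = (1 + q ^ 2) * (c * p - 2 * X / r ^ 2) ^ 2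
      - 2 * (p * q * ((c * p - 2 * X / r ^ 2) * (c * q - 2 * Y / r ^ 2)))
      + (1 + p ^ 2) * (c * q - 2 * Y / r ^ 2) ^ 2)
    (hK : 8 * (4 / r ^ 2 + 4 * H / r) / c ^ 2 < (K : ℝ) + 1)
    (hmax : φ * Lφ + ((K : ℝ) + 1) * gφ ≤ 0) :
    w ^ 2 ≤ 2 + 32 / (c ^ 2 * r ^ 2) := by
  by_contra hcon
  push Not at hcon
  have hQ0 : 0 < 4 / r ^ 2 + 4 * H / r := by positivity
  have hpq : p * X + q * Y ≥ - (w * r) := by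
    have h1 : (p * X + q * Y) ^ 2 ≤ (w * r) ^ 2 := by
      have : (p * X + q * Y) ^ 2 ≤ (p ^ 2 + q ^ 2) * (X ^ 2 + Y ^ 2) := by
        nlinarith [sq_nonneg (p * Y - q * X)]
      have h3 : (p ^ 2 + q ^ 2) * (X ^ 2 + Y ^ 2) ≤ w ^ 2 * r ^ 2 := by
        apply mul_le_mul (by linarith) hXY (by positivity) (by positivity)
      linarith [mul_pow w r 2]
    have := abs_le_of_sq_le_sq h1 (by positivity)
    linarith [neg_abs_le (p * X + q * Y)]
  have hL1 : - (w ^ 2 * (4 / r ^ 2 + 4 * H / r)) ≤ Lφ := by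
    rw [hL]
    have h1 : 4 * H * w * (- (w * r)) ≤ 4 * H * w * (p * X + q * Y) := by gcongr
    have h2 : (1 / r ^ 2) * (-4 * w ^ 2 + 4 * H * w * (- (w * r))) ≤
      (1 / r ^ 2) * (-2 * (1 + q ^ 2) - 2 * (1 + p ^ 2) + 4 * H * w * (p * X + q * Y)) := by
      gcongr
      nlinarith [sq_nonneg p, sq_nonneg q]
    have h3 : (1 / r ^ 2) * (-4 * w ^ 2 + 4 * H * w * (- (w * r)))
      = - (w ^ 2 * (4 / r ^ 2 + 4 * H / r)) := by field_simp; ring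
    have h4 : 0 ≤ c * (2 * H * w) := by positivity
    linarith
  have hL2 : - (w ^ 2 * (4 / r ^ 2 + 4 * H / r)) ≤ φ * Lφ := by
    have h1 : φ * - (w ^ 2 * (4 / r ^ 2 + 4 * H / r)) ≤ φ * Lφ := by gcongr
    have h2 : φ * (w ^ 2 * (4 / r ^ 2 + 4 * H / r)) ≤ 1 * (w ^ 2 * (4 / r ^ 2 + 4 * H / r)) := by
      gcongr
    linarith
  have hg1 : c ^ 2 * w ^ 2 / 8 ≤ gφ := by
    have h1 : (c * p - 2 * X / r ^ 2) ^ 2 + (c * q - 2 * Y / r ^ 2) ^ 2 ≤ gφ := by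
      rw [hg]
      nlinarith [sq_nonneg (q * (c * p - 2 * X / r ^ 2) - p * (c * q - 2 * Y / r ^ 2))]
    have h2 : c ^ 2 * (p ^ 2 + q ^ 2) / 2 - ((2 * X / r ^ 2) ^ 2 + (2 * Y / r ^ 2) ^ 2)
        ≤ (c * p - 2 * X / r ^ 2) ^ 2 + (c * q - 2 * Y / r ^ 2) ^ 2 := by
      nlinarith [sq_nonneg (c * p - 2 * (2 * X / r ^ 2)), sq_nonneg (c * q - 2 * (2 * Y / r ^ 2))]
    have h3 : (2 * X / r ^ 2) ^ 2 + (2 * Y / r ^ 2) ^ 2 ≤ 4 / r ^ 2 := by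
      have : (2 * X / r ^ 2) ^ 2 + (2 * Y / r ^ 2) ^ 2 = 4 * (X ^ 2 + Y ^ 2) / r ^ 4 := by
        field_simp; ring
      rw [this, div_le_div_iff₀ (by positivity) (by positivity)]
      linarith [mul_le_mul_of_nonneg_right hXY (sq_nonneg r)]
    have h4 : c ^ 2 * (32 / (c ^ 2 * r ^ 2)) = 8 * (4 / r ^ 2) := by field_simp; norm_num
    have h5 : c ^ 2 * (2 + 32 / (c ^ 2 * r ^ 2)) ≤ c ^ 2 * w ^ 2 := by gcongr
    have h6 : 0 < 4 / r ^ 2 := by positivity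
    have h7 : c ^ 2 * w ^ 2 = c ^ 2 * (1 + p ^ 2 + q ^ 2) := by rw [hw]
    have h8 := (h2.trans h1)
    have h9 : c ^ 2 * 2 + 8 * (4 / r ^ 2) ≤ c ^ 2 * w ^ 2 := by rw [← h4, ← mul_add]; exact h5
    have h10 : 0 ≤ c ^ 2 * w ^ 2 := by positivity
    generalize 4 / r ^ 2 = T at *
    clear h4 h5 h1 h2 hg hL hL1 hL2 hK hmax
    linarith
  rw [div_lt_iff₀ (by positivity)] at hK
  have hw2 : 0 < w ^ 2 := by positivity
  have h7 : ((K : ℝ) + 1) * (c ^ 2 * w ^ 2 / 8) ≤ ((K : ℝ) + 1) * gφ := by gcongr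
  have h8 := mul_lt_mul_of_pos_right hK hw2
  linarith

set_option maxHeartbeats 1000000 in
/-- Interior gradient estimate, in the style of Korevaar: bounded solutions have bounded `W` at
the centre of disks of radius `r` in `Ω`. With `φ = η / r² + c (u - M)`, the function
`φ^(K + 2) W` is maximised over the disk. If `m` is its maximum, `φ^(K + 2) - m ν` has a local
maximum with value `0` there, and superharmonicity of `ν` gives a bound on `W` at that point. -/
lemma gradient_estimate (hH : 0 < H) (hj : IsCMCJet (R := SmoothFam Ω) H dX dY u W ν) (hW : ∀ n x, 0 < evAt n x W)
    {M : ℝ} (hM : ∀ n x, |evAt n x u| ≤ M) {r : ℝ} (hr : 0 < r) :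
    ∃ C, ∀ n (x₀ : Ω), disk x₀ r ⊆ Ω → evAt n x₀ W ≤ C := by
  wlog hM0 : 0 < M generalizing M
  · exact this (M := |M| + 1) (fun n x => (hM n x).trans (by linarith [le_abs_self M])) (by positivity)
  -- with this `c`, the term `c (u - M)` lies between `-1/2` and `0`
  set c : ℝ := 1 / (4 * M)
  have hc : 0 < c := by positivity
  -- `K + 2` is odd, so that `φ ^ (K + 2) > 0` forces `φ > 0`
  obtain ⟨K, hKk, hodd⟩ : ∃ K : ℕ, 8 * (4 / r ^ 2 + 4 * H / r) / c ^ 2 < (K : ℝ) + 1 ∧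
      Odd (K + 2) := by
    obtain ⟨k, hk⟩ := exists_nat_gt (8 * (4 / r ^ 2 + 4 * H / r) / c ^ 2)
    refine ⟨2 * k + 1, hk.trans_le ?_, ⟨k + 1, by ring⟩⟩
    push_cast; linarith [(Nat.cast_nonneg k : (0:ℝ) ≤ k)]
  refine ⟨2 ^ (K + 2) * (2 + 32 / (c ^ 2 * r ^ 2)), fun n x₀ hD => ?_⟩
  have hν : ∀ x, evAt n x W * evAt n x ν = 1 := fun x => by rw [← map_mul, hj.inv, map_one]
  have hνpos : ∀ x, 0 < evAt n x ν := fun x => by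
    by_contra hcon
    nlinarith [hν x, hW n x]
  obtain ⟨φ, hφdef⟩ : ∃ φ : SmoothFam Ω, φ = (1 / r ^ 2) • eta x₀ r + c • (u - algebraMap ℝ _ M) :=
    ⟨_, rfl⟩
  have evφ : ∀ x, evAt n x φ = (1 / r ^ 2) * evAt n x (eta x₀ r) + c * (evAt n x u - M) := fun x => by
    simp [hφdef]
  have hη0 : evAt n x₀ (eta x₀ r) = r ^ 2 := by rw [ev_eta]; ring
  have hφ0 : 1 / 2 ≤ evAt n x₀ φ := by
    rw [evφ, hη0]
    have := (abs_le.1 (hM n x₀)).1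
    have h1 : c * (-M - M) ≤ c * (evAt n x₀ u - M) := by gcongr
    have h2 : c * (-M - M) = - (1 / 2) := by simp only [c]; field_simp; norm_num
    have h3 : (1 / r ^ 2) * r ^ 2 = 1 := by field_simp
    linarith
  have hφη : ∀ x, evAt n x φ ≤ (1 / r ^ 2) * evAt n x (eta x₀ r) := fun x => by
    rw [evφ]
    have := (abs_le.1 (hM n x)).2
    nlinarith
  obtain ⟨x, hx, hm⟩ := exists_max_disk (φ ^ (K + 2) * W) n x₀ hr hD
  have hx₀ := hm x₀ (by simp [disk]; positivity)
  obtain ⟨m, hmdef⟩ : ∃ m, m = evAt n x (φ ^ (K + 2) * W) := ⟨_, rfl⟩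
  rw [← hmdef] at hm hx₀
  simp only [map_mul, map_pow] at hx₀
  have hlow : (1 / 2) ^ (K + 2) * evAt n x₀ W ≤ m := by
    refine le_trans ?_ hx₀
    have := hW n x₀
    gcongr
  have hmpos : 0 < m := lt_of_lt_of_le (mul_pos (by positivity) (hW n x₀)) hlow
  have hφx : 0 < evAt n x φ := by
    rw [← hodd.pow_pos_iff]
    rw [hmdef, map_mul, map_pow] at hmpos
    exact pos_of_mul_pos_left hmpos (hW n x).le
  have hηx : 0 < evAt n x (eta x₀ r) := by
    have h1 := hφx.trans_le (hφη x)
    exact pos_of_mul_pos_right h1 (by positivity)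
  have hηr : evAt n x (eta x₀ r) ≤ r ^ 2 := by
    rw [ev_eta]; nlinarith [sq_nonneg ((x : ℝ × ℝ).1 - (x₀ : ℝ × ℝ).1), sq_nonneg ((x : ℝ × ℝ).2 - (x₀ : ℝ × ℝ).2)]
  have hφ1 : evAt n x φ ≤ 1 := by
    refine (hφη x).trans ?_
    calc (1 / r ^ 2) * evAt n x (eta x₀ r) ≤ (1 / r ^ 2) * r ^ 2 := by gcongr
      _ = 1 := by field_simp
  -- the maximum of the quotient `φ ^ (K + 2) / ν` becomes a maximum of a difference
  have hev : ∀ y, evAt n y (φ ^ (K + 2) - m • ν) = evAt n y ν * (evAt n y (φ ^ (K + 2) * W) - m) := by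
    intro y
    simp only [map_sub, map_mul, map_smul, smul_eq_mul]
    linear_combination (- evAt n y (φ ^ (K + 2))) * hν y
  have hloc : IsLocalMax (famExt Ω (φ ^ (K + 2) - m • ν).1 n) x := by
    refine isLocalMax_of_disk (φ ^ (K + 2) - m • ν) n x₀ r x hηx fun y hy => ?_
    rw [hev, hev, ← hmdef, sub_self, mul_zero]
    exact mul_nonpos_of_nonneg_of_nonpos (hνpos y).le (by linarith [hm y hy])
  have hLle := lapOp_nonpos_of_isLocalMax (H := H) (u := u) (W := W) _ n x hloc
  rw [lapOp_sub_smul, lapOp_pow, map_sub, map_smul, smul_eq_mul] at hLle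
  have hJ := (jet_estimates hj (evAt n x) (hνpos x)).1
  have hmain : evAt n x φ * evAt n x (lapOp (R := SmoothFam Ω) H dX dY u W φ)
      + ((K : ℝ) + 1) * evAt n x (gradSq (R := SmoothFam Ω) dX dY u φ) ≤ 0 := by
    have h1 : evAt n x (((K : SmoothFam Ω) + 2) * φ ^ K * (φ * lapOp (R := SmoothFam Ω) H dX dY u W φ
        + ((K : SmoothFam Ω) + 1) * gradSq (R := SmoothFam Ω) dX dY u φ)) ≤ 0 :=
      (sub_nonpos.1 hLle).trans (mul_nonpos_of_nonneg_of_nonpos hmpos.le hJ)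
    simp only [map_mul, map_add, map_natCast, map_ofNat, map_one, map_pow] at h1
    have h2 : 0 < ((K : ℝ) + 2) * evAt n x φ ^ K := by positivity
    exact le_of_not_gt fun hcon => absurd h1 (not_le.2 (mul_pos h2 hcon))
  have e1 := ev_dX_eta x₀ r n x
  have e2 := ev_dY_eta x₀ r n x
  have hw := congrArg (evAt n x) hj.sq
  simp only [map_add, map_pow, map_one] at hw
  have hLφ : lapOp (R := SmoothFam Ω) H dX dY u W φ = (1 / r ^ 2) • lapOp (R := SmoothFam Ω) H dX dY u W (eta x₀ r)
      + c • ((2 * H) • W) := by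
    rw [hφdef, lapOp_add_smul, ← lapOp_self hj]
    congr 2
    simp [lapOp, ellOp]
  have hfin := gradient_real hr hH hc hw (hW n x) hx hφx hφ1 (K := K)
    (Lφ := evAt n x (lapOp (R := SmoothFam Ω) H dX dY u W φ)) (gφ := evAt n x (gradSq (R := SmoothFam Ω) dX dY u φ))
    (by
      rw [hLφ]
      simp only [lapOp, ellOp, map_add, map_sub, map_mul, map_smul, map_pow, map_one, map_ofNat,
        smul_eq_mul, ev_dXdX_eta, ev_dYdX_eta, ev_dYdY_eta, e1, e2]
      ring)
    (by
      simp only [hφdef, gradSq, map_add, map_sub, map_mul, map_smul, map_pow, map_one, map_ofNat,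
        smul_eq_mul, Derivation.map_smul, Derivation.map_algebraMap, e1, e2, map_zero]
      ring) hKk hmain
  have hw1 : evAt n x W ≤ 2 + 32 / (c ^ 2 * r ^ 2) := by
    have : 1 ≤ evAt n x W := by
      rw [← abs_of_pos (hW n x), ← one_le_sq_iff_one_le_abs, hw]
      linarith [sq_nonneg (evAt n x (dX u)), sq_nonneg (evAt n x (dY u))]
    exact (le_self_pow₀ this two_ne_zero).trans hfin
  have hmle : m ≤ 2 + 32 / (c ^ 2 * r ^ 2) := by
    rw [hmdef, map_mul, map_pow]
    calc _ ≤ 1 * evAt n x W := by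
          have := hW n x
          gcongr
          exact pow_le_one₀ hφx.le hφ1
      _ ≤ _ := by linarith
  have h2 : (2:ℝ) ^ (K + 2) * ((1 / 2) ^ (K + 2) * evAt n x₀ W) = evAt n x₀ W := by
    rw [← mul_assoc, ← mul_pow]; norm_num
  rw [← h2]
  gcongr
  exact hlow.trans hmle

end Gradient

/-! ### Local bounds for the second derivatives -/

section Curvature

open TopologicalSpace

/-- The algebra of families that are bounded on every compact subset of `Ω`, uniformly in `n`. -/
def LocBdd (Ω : Opens (ℝ × ℝ)) : Subalgebra ℝ (SmoothFam Ω) where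
  carrier := {f | ∀ K : Set (ℝ × ℝ), IsCompact K → K ⊆ Ω → ∃ C, ∀ n (x : Ω), (x : ℝ × ℝ) ∈ K →
    |evAt n x f| ≤ C}
  mul_mem' {f g} hf hg K hK hKΩ := by
    obtain ⟨C, hC⟩ := hf K hK hKΩ
    obtain ⟨D, hD⟩ := hg K hK hKΩ
    refine ⟨C * D, fun n x hx => ?_⟩
    rw [map_mul, abs_mul]
    exact mul_le_mul (hC n x hx) (hD n x hx) (abs_nonneg _) ((abs_nonneg _).trans (hC n x hx))
  add_mem' {f g} hf hg K hK hKΩ := by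
    obtain ⟨C, hC⟩ := hf K hK hKΩ
    obtain ⟨D, hD⟩ := hg K hK hKΩ
    refine ⟨C + D, fun n x hx => ?_⟩
    rw [map_add]
    exact (abs_add_le _ _).trans (add_le_add (hC n x hx) (hD n x hx))
  algebraMap_mem' c K hK hKΩ := ⟨|c|, fun n x hx => by simp⟩

variable {Ω : Opens (ℝ × ℝ)} {H : ℝ} {u W ν : SmoothFam Ω}

lemma mem_LocBdd {f : SmoothFam Ω} : f ∈ LocBdd Ω ↔ ∀ K : Set (ℝ × ℝ), IsCompact K → K ⊆ Ω →
    ∃ C, ∀ n (x : Ω), (x : ℝ × ℝ) ∈ K → |evAt n x f| ≤ C := Iff.rfl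

lemma LocBdd.exists_pos {f : SmoothFam Ω} (hf : f ∈ LocBdd Ω) {K : Set (ℝ × ℝ)} (hK : IsCompact K)
    (hKΩ : K ⊆ Ω) : ∃ C, 0 < C ∧ ∀ n (x : Ω), (x : ℝ × ℝ) ∈ K → |evAt n x f| ≤ C := by
  obtain ⟨C, hC⟩ := hf K hK hKΩ
  exact ⟨|C| + 1, by positivity, fun n x hx => (hC n x hx).trans (by linarith [le_abs_self C])⟩

lemma LocBdd.of_sq_le {f g : SmoothFam Ω} (hg : g ∈ LocBdd Ω)
    (h : ∀ n x, evAt n x f ^ 2 ≤ evAt n x g) : f ∈ LocBdd Ω := by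
  intro K hK hKΩ
  obtain ⟨C, hC⟩ := hg K hK hKΩ
  refine ⟨√C, fun n x hx => ?_⟩
  refine Real.abs_le_sqrt ?_
  exact (h n x).trans ((le_abs_self _).trans (hC n x hx))

/-- A compact `K ⊆ Ω` has a compact neighbourhood in `Ω` containing all disks of some fixed radius
centred in `K`. -/
lemma exists_disk_nhd {K : Set (ℝ × ℝ)} (hK : IsCompact K) (hKΩ : K ⊆ Ω) :
    ∃ r, 0 < r ∧ ∃ K', IsCompact K' ∧ K' ⊆ Ω ∧ ∀ x ∈ K, disk x r ⊆ K' := by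
  obtain ⟨δ, hδ, h⟩ := hK.exists_cthickening_subset_open Ω.isOpen hKΩ
  refine ⟨δ, hδ, Metric.cthickening δ K, hK.cthickening, h, fun x hx => ?_⟩
  exact (disk_subset_closedBall x hδ.le).trans (Metric.closedBall_subset_cthickening hx δ)

lemma W_mem_LocBdd (hH : 0 < H) (hj : IsCMCJet (R := SmoothFam Ω) H dX dY u W ν) (hW : ∀ n x, 0 < evAt n x W)
    {M : ℝ} (hM : ∀ n x, |evAt n x u| ≤ M) : W ∈ LocBdd Ω := by
  intro K hK hKΩ
  obtain ⟨r, hr, K', hK', hK'Ω, hd⟩ := exists_disk_nhd hK hKΩ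
  obtain ⟨C, hC⟩ := gradient_estimate hH hj hW hM hr
  exact ⟨C, fun n x hx => (abs_of_pos (hW n x)).trans_le (hC n x ((hd x hx).trans hK'Ω))⟩

lemma ev_sq (hj : IsCMCJet (R := SmoothFam Ω) H dX dY u W ν) (n : ℕ) (x : Ω) :
    evAt n x W ^ 2 = 1 + evAt n x (dX u) ^ 2 + evAt n x (dY u) ^ 2 := by
  have := congrArg (evAt n x) hj.sq
  simpa only [map_add, map_pow, map_one] using this

lemma ev_inv (hj : IsCMCJet (R := SmoothFam Ω) H dX dY u W ν) (n : ℕ) (x : Ω) : evAt n x W * evAt n x ν = 1 := by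
  rw [← map_mul, hj.inv, map_one]

lemma ev_ν_pos (hj : IsCMCJet (R := SmoothFam Ω) H dX dY u W ν) (hW : ∀ n x, 0 < evAt n x W) (n : ℕ) (x : Ω) :
    0 < evAt n x ν := by
  have h : 0 < evAt n x W * evAt n x ν := by rw [ev_inv hj]; exact one_pos
  exact pos_of_mul_pos_right h (hW n x).le

lemma dXu_mem_LocBdd (hj : IsCMCJet (R := SmoothFam Ω) H dX dY u W ν) (hWb : W ∈ LocBdd Ω) : dX u ∈ LocBdd Ω := by
  refine LocBdd.of_sq_le (pow_mem hWb 2) fun n x => ?_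
  rw [map_pow, ev_sq hj]
  nlinarith [sq_nonneg (evAt n x (dY u))]

lemma dYu_mem_LocBdd (hj : IsCMCJet (R := SmoothFam Ω) H dX dY u W ν) (hWb : W ∈ LocBdd Ω) : dY u ∈ LocBdd Ω := by
  refine LocBdd.of_sq_le (pow_mem hWb 2) fun n x => ?_
  rw [map_pow, ev_sq hj]
  nlinarith [sq_nonneg (evAt n x (dX u))]

lemma ν_mem_LocBdd (hj : IsCMCJet (R := SmoothFam Ω) H dX dY u W ν) (hW : ∀ n x, 0 < evAt n x W) : ν ∈ LocBdd Ω := by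
  refine LocBdd.of_sq_le (one_mem _) fun n x => ?_
  have h1 := ev_inv hj n x
  have h2 := ev_sq hj n x
  rw [map_one]
  have h3 : evAt n x W ^ 2 * evAt n x ν ^ 2 = 1 := by rw [← mul_pow, h1, one_pow]
  nlinarith [sq_nonneg (evAt n x ν), sq_nonneg (evAt n x (dX u)), sq_nonneg (evAt n x (dY u)),
    mul_nonneg (sq_nonneg (evAt n x ν)) (sq_nonneg (evAt n x (dX u))),
    mul_nonneg (sq_nonneg (evAt n x ν)) (sq_nonneg (evAt n x (dY u)))]

lemma gradSq_nonneg (f : SmoothFam Ω) (n : ℕ) (x : Ω) :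
    0 ≤ evAt n x (gradSq (R := SmoothFam Ω) dX dY u f) := by
  simp only [gradSq, map_add, map_sub, map_mul, map_pow, map_one, map_ofNat]
  nlinarith [sq_nonneg (evAt n x (dX f)), sq_nonneg (evAt n x (dY f)),
    sq_nonneg (evAt n x (dY u) * evAt n x (dX f) - evAt n x (dX u) * evAt n x (dY f))]

/-- Curvature estimate: once `W` is locally bounded, the Simons-type inequality reads
`L f ≥ 4 ν² f² ≥ κ f²` where `f = hopfSq` is positive, and the Keller–Osserman bound applies. -/
lemma hopfSq_mem_LocBdd (hH : 0 < H) (hj : IsCMCJet (R := SmoothFam Ω) H dX dY u W ν) (hW : ∀ n x, 0 < evAt n x W)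
    (hWb : W ∈ LocBdd Ω) : hopfSq (R := SmoothFam Ω) H dX dY u ∈ LocBdd Ω := by
  intro K hK hKΩ
  obtain ⟨r, hr, K', hK', hK'Ω, hd⟩ := exists_disk_nhd hK hKΩ
  obtain ⟨Cw, hCw0, hCw⟩ := LocBdd.exists_pos hWb hK' hK'Ω
  obtain ⟨A₁, hA₁0, hA₁⟩ := LocBdd.exists_pos (f := (2 * H) • (W * dX u))
    (Subalgebra.smul_mem _ (mul_mem hWb (dXu_mem_LocBdd hj hWb)) _) hK' hK'Ω
  obtain ⟨A₂, hA₂0, hA₂⟩ := LocBdd.exists_pos (f := (2 * H) • (W * dY u))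
    (Subalgebra.smul_mem _ (mul_mem hWb (dYu_mem_LocBdd hj hWb)) _) hK' hK'Ω
  obtain ⟨C', hC'⟩ := keller_osserman (Ω := Ω) r (Cw ^ 2 + A₁ + A₂) (4 / Cw ^ 2) 0 hr (by positivity)
    (by positivity) le_rfl
  obtain ⟨f, hf⟩ : ∃ f, f = hopfSq (R := SmoothFam Ω) H dX dY u := ⟨_, rfl⟩
  rw [← hf]
  have hest : ∀ n (x : Ω), _ := fun n x => jet_estimates hj (evAt n x) (ev_ν_pos hj hW n x)
  rw [← hf] at hest
  refine ⟨C', fun n x₀ hx₀ => ?_⟩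
  rw [abs_of_nonneg (hest n x₀).2.1]
  have hD := hd x₀ hx₀
  refine hC' n x₀ f (fun x => 1 + evAt n x (dY u) ^ 2) (fun x => - (evAt n x (dX u) * evAt n x (dY u)))
    (fun x => 1 + evAt n x (dX u) ^ 2) (fun x => - evAt n x ((2 * H) • (W * dX u)))
    (fun x => - evAt n x ((2 * H) • (W * dY u))) (hD.trans hK'Ω) (fun x hx => ?_) (fun x hx hfx => ?_)
  · have h1 := hCw n x (hD hx)
    have h2 := hA₁ n x (hD hx)
    have h3 := hA₂ n x (hD hx)
    have h4 := ev_sq hj n x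
    rw [abs_of_pos (hW n x)] at h1
    have h5 : evAt n x W ^ 2 ≤ Cw ^ 2 := by have := hW n x; gcongr
    have hp := sq_nonneg (evAt n x (dX u))
    have hq := sq_nonneg (evAt n x (dY u))
    refine ⟨by positivity, by nlinarith, by linarith, by linarith, ?_, ?_⟩
    · rw [abs_neg]; nlinarith
    · rw [abs_neg]; nlinarith
  · obtain ⟨-, -, h3⟩ := hest n x
    have hg := gradSq_nonneg (u := u) f n x
    have hν := ev_ν_pos hj hW n x
    have hlow : 4 / Cw ^ 2 ≤ 4 * evAt n x ν ^ 2 := by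
      have h1 := hCw n x (hD hx)
      rw [abs_of_pos (hW n x)] at h1
      have h2 : 1 ≤ Cw * evAt n x ν := by
        rw [← ev_inv hj n x]; gcongr
      rw [div_le_iff₀ (by positivity)]
      nlinarith [mul_self_le_mul_self zero_le_one h2]
    have hL : 4 * evAt n x ν ^ 2 * evAt n x f ^ 2 ≤ evAt n x (lapOp (R := SmoothFam Ω) H dX dY u W f) := by
      refine le_of_mul_le_mul_left ?_ hfx
      refine le_trans (le_of_eq ?_) (h3.trans (sub_le_self _ hg))
      ring
    have hL2 : 4 / Cw ^ 2 * evAt n x f ^ 2 - 0 ≤ evAt n x (lapOp (R := SmoothFam Ω) H dX dY u W f) := by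
      rw [sub_zero]
      exact (mul_le_mul_of_nonneg_right hlow (sq_nonneg _)).trans hL
    refine hL2.trans (le_of_eq ?_)
    simp only [lapOp, ellOp, map_add, map_sub, map_mul, map_smul, map_pow, map_one, map_ofNat,
      smul_eq_mul]
    ring

/-- The left-hand sides are the squared entries of the traceless part of the second fundamental
form times `W`; they are controlled by the value `f` of `hopfSq`. -/
lemma second_real {H p q w r s t f : ℝ} (hw : w ^ 2 = 1 + p ^ 2 + q ^ 2)
    (hE : (1 + q ^ 2) * r - 2 * (p * q * s) + (1 + p ^ 2) * t = 2 * H * w ^ 3)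
    (hf : f = H ^ 2 * (1 + p ^ 2 + q ^ 2) ^ 2 - (r * t - s ^ 2)) :
    (r - H * w * (1 + p ^ 2)) ^ 2 ≤ (1 + p ^ 2) * f ∧ (s - H * w * (p * q)) ^ 2 ≤ (1 + p ^ 2) * f ∧
    (t - H * w * (1 + q ^ 2)) ^ 2 ≤ (1 + q ^ 2) * f := by
  obtain ⟨α, hα⟩ : ∃ α, α = r - H * w * (1 + p ^ 2) := ⟨_, rfl⟩
  obtain ⟨β, hβ⟩ : ∃ α, α = s - H * w * (p * q) := ⟨_, rfl⟩
  obtain ⟨γ, hγ⟩ : ∃ α, α = t - H * w * (1 + q ^ 2) := ⟨_, rfl⟩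
  obtain rfl : r = α + H * w * (1 + p ^ 2) := by linarith
  obtain rfl : s = β + H * w * (p * q) := by linarith
  obtain rfl : t = γ + H * w * (1 + q ^ 2) := by linarith
  have hE' : (1 + q ^ 2) * α - 2 * (p * q * β) + (1 + p ^ 2) * γ = 0 := by
    linear_combination hE + 2 * H * w * hw
  have hf' : f = β ^ 2 - α * γ := by
    rw [hf, ← hw]
    linear_combination (-H * w) * hE' + H ^ 2 * w ^ 2 * hw
  rw [← hα, ← hβ, ← hγ]
  have i1 : (1 + p ^ 2) * f = α ^ 2 + β ^ 2 + (q * α - p * β) ^ 2 := by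
    rw [hf']; linear_combination (-α) * hE'
  have i2 : (1 + q ^ 2) * f = γ ^ 2 + β ^ 2 + (p * γ - q * β) ^ 2 := by
    rw [hf']; linear_combination (-γ) * hE'
  refine ⟨?_, ?_, ?_⟩
  · rw [i1]; nlinarith [sq_nonneg β, sq_nonneg (q * α - p * β)]
  · rw [i1]; nlinarith [sq_nonneg α, sq_nonneg (q * α - p * β)]
  · rw [i2]; nlinarith [sq_nonneg β, sq_nonneg (p * γ - q * β)]

lemma mem_of_sub_mem {f g : SmoothFam Ω} (h : f - g ∈ LocBdd Ω) (hg : g ∈ LocBdd Ω) : f ∈ LocBdd Ω := by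
  rw [← sub_add_cancel f g]
  exact add_mem h hg

lemma second_derivatives_mem_LocBdd (hH : 0 < H) (hj : IsCMCJet (R := SmoothFam Ω) H dX dY u W ν)
    (hW : ∀ n x, 0 < evAt n x W) (hWb : W ∈ LocBdd Ω) :
    dX (dX u) ∈ LocBdd Ω ∧ dY (dX u) ∈ LocBdd Ω ∧ dY (dY u) ∈ LocBdd Ω := by
  have hp := dXu_mem_LocBdd hj hWb
  have hq := dYu_mem_LocBdd hj hWb
  have hf := hopfSq_mem_LocBdd hH hj hW hWb
  have h1p : 1 + dX u ^ 2 ∈ LocBdd Ω := add_mem (one_mem _) (pow_mem hp 2)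
  have h1q : 1 + dY u ^ 2 ∈ LocBdd Ω := add_mem (one_mem _) (pow_mem hq 2)
  have key := fun n (x : Ω) => second_real (H := H) (ev_sq hj n x) (r := evAt n x (dX (dX u)))
    (s := evAt n x (dY (dX u))) (t := evAt n x (dY (dY u)))
    (f := evAt n x (hopfSq (R := SmoothFam Ω) H dX dY u))
    (by
      have := congrArg (evAt n x) hj.eqn
      simpa only [map_add, map_sub, map_mul, map_smul, map_pow, map_one, map_ofNat, smul_eq_mul]
        using this)
    (by simp only [hopfSq, map_add, map_sub, map_mul, map_smul, map_pow, map_one, smul_eq_mul])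
  have hW1 : H • (W * (1 + dX u ^ 2)) ∈ LocBdd Ω := Subalgebra.smul_mem _ (mul_mem hWb h1p) _
  have hW2 : H • (W * (dX u * dY u)) ∈ LocBdd Ω := Subalgebra.smul_mem _ (mul_mem hWb (mul_mem hp hq)) _
  have hW3 : H • (W * (1 + dY u ^ 2)) ∈ LocBdd Ω := Subalgebra.smul_mem _ (mul_mem hWb h1q) _
  refine ⟨?_, ?_, ?_⟩
  · refine mem_of_sub_mem ?_ hW1
    refine LocBdd.of_sq_le (mul_mem h1p hf) fun n x => le_trans (le_of_eq ?_) ((key n x).1.trans_eq ?_)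
    · simp only [map_sub, map_smul, map_mul, map_add, map_one, map_pow, smul_eq_mul]; ring
    · simp only [map_mul, map_add, map_one, map_pow]
  · refine mem_of_sub_mem ?_ hW2
    refine LocBdd.of_sq_le (mul_mem h1p hf) fun n x => le_trans (le_of_eq ?_) ((key n x).2.1.trans_eq ?_)
    · simp only [map_sub, map_smul, map_mul, smul_eq_mul]; ring
    · simp only [map_mul, map_add, map_one, map_pow]
  · refine mem_of_sub_mem ?_ hW3
    refine LocBdd.of_sq_le (mul_mem h1q hf) fun n x => le_trans (le_of_eq ?_) ((key n x).2.2.trans_eq ?_)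
    · simp only [map_sub, map_smul, map_mul, map_add, map_one, map_pow, smul_eq_mul]; ring
    · simp only [map_mul, map_add, map_one, map_pow]

end Curvature

/-! ### Closed systems and their prolongation -/

section Prolongation

open TopologicalSpace

section Abs
variable {R : Type*} [CommRing R] [Algebra ℝ R]

/-- Elements affine in the first derivatives of members of `S`, with coefficients in the algebra
generated by `S`. -/
inductive AffineJet (dx dy : Derivation ℝ R R) (S : Set R) : R → Prop
  | coef {a : R} : a ∈ Algebra.adjoin ℝ S → AffineJet dx dy S a
  | derX {a f : R} : a ∈ Algebra.adjoin ℝ S → f ∈ S → AffineJet dx dy S (a * dx f)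
  | derY {a f : R} : a ∈ Algebra.adjoin ℝ S → f ∈ S → AffineJet dx dy S (a * dy f)
  | add {m m' : R} : AffineJet dx dy S m → AffineJet dx dy S m' → AffineJet dx dy S (m + m')

variable {dx dy : Derivation ℝ R R} {S : Set R} {u W ν : R} {H : ℝ}

lemma AffineJet.mul {m a : R} (hm : AffineJet dx dy S m) (ha : a ∈ Algebra.adjoin ℝ S) :
    AffineJet dx dy S (a * m) := by
  induction hm with
  | coef hb => exact .coef (mul_mem ha hb)
  | derX hb hf => rw [← mul_assoc]; exact .derX (mul_mem ha hb) hf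
  | derY hb hf => rw [← mul_assoc]; exact .derY (mul_mem ha hb) hf
  | add _ _ h1 h2 => rw [mul_add]; exact .add h1 h2

lemma AffineJet.neg {m : R} (hm : AffineJet dx dy S m) : AffineJet dx dy S (-m) := by
  have := hm.mul (neg_mem (one_mem (Algebra.adjoin ℝ S)))
  simpa using this

lemma AffineJet.sub {m m' : R} (hm : AffineJet dx dy S m) (hm' : AffineJet dx dy S m') :
    AffineJet dx dy S (m - m') := by
  rw [sub_eq_add_neg]; exact .add hm hm'.neg

lemma AffineJet.derX' {f : R} (hf : f ∈ S) : AffineJet dx dy S (dx f) := by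
  simpa using AffineJet.derX (dx := dx) (dy := dy) (one_mem (Algebra.adjoin ℝ S)) hf

lemma AffineJet.derY' {f : R} (hf : f ∈ S) : AffineJet dx dy S (dy f) := by
  simpa using AffineJet.derY (dx := dx) (dy := dy) (one_mem (Algebra.adjoin ℝ S)) hf

lemma affineJet_der (d : Derivation ℝ R R) (hd : ∀ f ∈ S, AffineJet dx dy S (d f)) {a : R}
    (ha : a ∈ Algebra.adjoin ℝ S) : AffineJet dx dy S (d a) := by
  induction ha using Algebra.adjoin_induction with
  | mem x hx => exact hd x hx
  | algebraMap r => rw [d.map_algebraMap]; exact .coef (zero_mem _)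
  | add x y _ _ h1 h2 => rw [map_add]; exact .add h1 h2
  | mul x y hx hy h1 h2 =>
    rw [Derivation.leibniz, smul_eq_mul, smul_eq_mul]
    exact .add (h2.mul hx) (h1.mul hy)

lemma affineJet_dx {a : R} (ha : a ∈ Algebra.adjoin ℝ S) : AffineJet dx dy S (dx a) :=
  affineJet_der dx (fun _ hf => .derX' hf) ha

lemma affineJet_dy {a : R} (ha : a ∈ Algebra.adjoin ℝ S) : AffineJet dx dy S (dy a) :=
  affineJet_der dy (fun _ hf => .derY' hf) ha

/-- The set `S` enlarged by the first derivatives of its members. -/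
def prolong (dx dy : Derivation ℝ R R) (S : Set R) : Set R := S ∪ (Set.image dx S ∪ Set.image dy S)

lemma subset_prolong : S ⊆ prolong dx dy S := subset_union_left
lemma dx_mem_prolong {f : R} (hf : f ∈ S) : dx f ∈ prolong dx dy S := .inr (.inl ⟨f, hf, rfl⟩)
lemma dy_mem_prolong {f : R} (hf : f ∈ S) : dy f ∈ prolong dx dy S := .inr (.inr ⟨f, hf, rfl⟩)

lemma adjoin_prolong {a : R} (ha : a ∈ Algebra.adjoin ℝ S) :
    a ∈ Algebra.adjoin ℝ (prolong dx dy S) := Algebra.adjoin_mono subset_prolong ha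

lemma AffineJet.mem_adjoin {m : R} (hm : AffineJet dx dy S m) :
    m ∈ Algebra.adjoin ℝ (prolong dx dy S) := by
  induction hm with
  | coef hb => exact adjoin_prolong hb
  | derX hb hf => exact mul_mem (adjoin_prolong hb) (Algebra.subset_adjoin (dx_mem_prolong hf))
  | derY hb hf => exact mul_mem (adjoin_prolong hb) (Algebra.subset_adjoin (dy_mem_prolong hf))
  | add _ _ h1 h2 => exact add_mem h1 h2

lemma der_ofNat_two (d : Derivation ℝ R R) : d 2 = 0 := by
  rw [(map_ofNat (algebraMap ℝ R) 2).symm]; exact d.map_algebraMap 2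

/-- The commutator of a derivation with `ellOp` involves only second derivatives of `f`, with
coefficients quadratic in the 2-jet of `u`. -/
lemma ellOp_der (d : Derivation ℝ R R) (hx : ∀ f, d (dx f) = dx (d f))
    (hy : ∀ f, d (dy f) = dy (d f)) (f : R) :
    ellOp dx dy u (d f) = d (ellOp dx dy u f) - (2 * (dy u * d (dy u)) * dx (dx f)
      - 2 * (d (dx u) * dy u + dx u * d (dy u)) * dy (dx f)
      + 2 * (dx u * d (dx u)) * dy (dy f)) := by
  simp only [ellOp, map_add, map_sub, Derivation.leibniz, Derivation.leibniz_pow, smul_eq_mul,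
    Derivation.map_one_eq_zero, der_ofNat_two, nsmul_eq_mul, Nat.reduceSub, pow_one,
    Nat.cast_ofNat, ← hx, ← hy]
  ring

/-- The symmetric bilinear form of the principal symbol of `ellOp`, the polarisation of `gradSq`. -/
def gradBil (dx dy : Derivation ℝ R R) (u f g : R) : R :=
  (1 + dy u ^ 2) * (dx f * dx g) - dx u * dy u * (dx f * dy g + dy f * dx g)
    + (1 + dx u ^ 2) * (dy f * dy g)

lemma ellOp_mul (f g : R) : ellOp dx dy u (f * g)
    = f * ellOp dx dy u g + g * ellOp dx dy u f + 2 * gradBil dx dy u f g := by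
  simp only [ellOp, gradBil, map_add, Derivation.leibniz, smul_eq_mul]
  ring

lemma ellOp_sum {ι : Type*} (s : Finset ι) (f : ι → R) :
    ellOp dx dy u (∑ i ∈ s, f i) = ∑ i ∈ s, ellOp dx dy u (f i) := by
  simp only [ellOp, map_sum, Finset.mul_sum, ← Finset.sum_sub_distrib, ← Finset.sum_add_distrib]

lemma ellOp_add (f g : R) : ellOp dx dy u (f + g) = ellOp dx dy u f + ellOp dx dy u g := by
  simp only [ellOp, map_add]; ring

/-- `S` contains the first and second derivatives of `u`, and `ellOp` maps each member of `S` to an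
element affine in the first derivatives of members of `S`. Thus `S` solves an elliptic system with
right-hand side of lower order, to which the method of Bernstein applies. -/
structure IsClosedSystem (dx dy : Derivation ℝ R R) (u : R) (S : Set R) : Prop where
  p_mem : dx u ∈ S
  q_mem : dy u ∈ S
  r_mem : dx (dx u) ∈ S
  s_mem : dy (dx u) ∈ S
  t_mem : dy (dy u) ∈ S
  ell_mem : ∀ f ∈ S, AffineJet dx dy S (ellOp dx dy u f)

lemma two_mem (S : Set R) : (2 : R) ∈ Algebra.adjoin ℝ S := ofNat_mem _ 2

lemma coefs_mem (comm : ∀ f, dx (dy f) = dy (dx f)) (hp : dx u ∈ S) (hq : dy u ∈ S)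
    (hr : dx (dx u) ∈ S) (hs : dy (dx u) ∈ S) (ht : dy (dy u) ∈ S) {d : Derivation ℝ R R}
    (hd : d = dx ∨ d = dy) :
    2 * (dy u * d (dy u)) ∈ Algebra.adjoin ℝ S ∧
    2 * (d (dx u) * dy u + dx u * d (dy u)) ∈ Algebra.adjoin ℝ S ∧
    2 * (dx u * d (dx u)) ∈ Algebra.adjoin ℝ S := by
  have s {x : R} (h : x ∈ S) : x ∈ Algebra.adjoin ℝ S := Algebra.subset_adjoin h
  have h1 : d (dx u) ∈ Algebra.adjoin ℝ S := by
    rcases hd with rfl | rfl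
    exacts [s hr, s hs]
  have h2 : d (dy u) ∈ Algebra.adjoin ℝ S := by
    rcases hd with rfl | rfl
    · rw [comm]; exact s hs
    · exact s ht
  exact ⟨mul_mem (two_mem S) (mul_mem (s hq) h2),
    mul_mem (two_mem S) (add_mem (mul_mem h1 (s hq)) (mul_mem (s hp) h2)),
    mul_mem (two_mem S) (mul_mem (s hp) h1)⟩

/-- If `L f` lies in the coefficient algebra and second derivatives of `f` are affine in first
derivatives of `S`, so are `L (∂_x f)` and `L (∂_y f)`. -/
lemma affineJet_ellOp_der (comm : ∀ f, dx (dy f) = dy (dx f)) (hp : dx u ∈ S) (hq : dy u ∈ S)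
    (hr : dx (dx u) ∈ S) (hs : dy (dx u) ∈ S) (ht : dy (dy u) ∈ S) {f : R}
    (hf : ellOp dx dy u f ∈ Algebra.adjoin ℝ S)
    (hxx : AffineJet dx dy S (dx (dx f))) (hxy : AffineJet dx dy S (dy (dx f)))
    (hyy : AffineJet dx dy S (dy (dy f))) :
    AffineJet dx dy S (ellOp dx dy u (dx f)) ∧ AffineJet dx dy S (ellOp dx dy u (dy f)) := by
  constructor
  · obtain ⟨h1, h2, h3⟩ := coefs_mem comm hp hq hr hs ht (d := dx) (.inl rfl)
    rw [ellOp_der dx (fun _ => rfl) comm]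
    exact (affineJet_dx hf).sub (((hxx.mul h1).sub (hxy.mul h2)).add (hyy.mul h3))
  · obtain ⟨h1, h2, h3⟩ := coefs_mem comm hp hq hr hs ht (d := dy) (.inr rfl)
    rw [ellOp_der dy (fun f => (comm f).symm) (fun _ => rfl)]
    exact (affineJet_dy hf).sub (((hxx.mul h1).sub (hxy.mul h2)).add (hyy.mul h3))

/-- Closed systems are stable under prolongation: this is the induction step from bounds on `k`
derivatives to bounds on `k + 1` derivatives. -/
lemma IsClosedSystem.prolong (comm : ∀ f, dx (dy f) = dy (dx f)) (h : IsClosedSystem dx dy u S) :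
    IsClosedSystem dx dy u (prolong dx dy S) := by
  refine ⟨subset_prolong h.p_mem, subset_prolong h.q_mem, subset_prolong h.r_mem,
    subset_prolong h.s_mem, subset_prolong h.t_mem, ?_⟩
  have key : ∀ f ∈ S, _ := fun f hf => affineJet_ellOp_der (S := _root_.prolong dx dy S) comm
    (subset_prolong h.p_mem) (subset_prolong h.q_mem) (subset_prolong h.r_mem)
    (subset_prolong h.s_mem) (subset_prolong h.t_mem) (h.ell_mem f hf).mem_adjoin
    (.derX' (dx_mem_prolong hf)) (.derY' (dx_mem_prolong hf)) (.derY' (dy_mem_prolong hf))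
  rintro f (hf | ⟨f, hf, rfl⟩ | ⟨f, hf, rfl⟩)
  · exact .coef (h.ell_mem f hf).mem_adjoin
  · exact (key f hf).1
  · exact (key f hf).2

/-- The closed system with which the induction starts. -/
def baseSystem (dx dy : Derivation ℝ R R) (u W ν : R) : Set R :=
  {u, W, ν, dx u, dy u, dx (dx u), dy (dx u), dy (dy u)}

lemma baseSystem_closed (hj : IsCMCJet H dx dy u W ν) :
    IsClosedSystem dx dy u (baseSystem dx dy u W ν) := by
  obtain ⟨S, hS⟩ : ∃ S, S = baseSystem dx dy u W ν := ⟨_, rfl⟩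
  have comm := hj.comm
  have hp : dx u ∈ S := by simp [hS, baseSystem]
  have hq : dy u ∈ S := by simp [hS, baseSystem]
  have hr : dx (dx u) ∈ S := by simp [hS, baseSystem]
  have hs : dy (dx u) ∈ S := by simp [hS, baseSystem]
  have ht : dy (dy u) ∈ S := by simp [hS, baseSystem]
  have hW : W ∈ S := by simp [hS, baseSystem]
  have hν : ν ∈ S := by simp [hS, baseSystem]
  have s {x : R} (h : x ∈ S) : x ∈ Algebra.adjoin ℝ S := Algebra.subset_adjoin h
  have d1 {d : Derivation ℝ R R} (hd : d = dx ∨ d = dy) : d (dx u) ∈ Algebra.adjoin ℝ S := by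
    rcases hd with rfl | rfl
    exacts [s hr, s hs]
  have d2 {d : Derivation ℝ R R} (hd : d = dx ∨ d = dy) : d (dy u) ∈ Algebra.adjoin ℝ S := by
    rcases hd with rfl | rfl
    · rw [comm]; exact s hs
    · exact s ht
  have dpq {d : Derivation ℝ R R} (hd : d = dx ∨ d = dy) :
      dx u * d (dx u) + dy u * d (dy u) ∈ Algebra.adjoin ℝ S :=
    add_mem (mul_mem (s hp) (d1 hd)) (mul_mem (s hq) (d2 hd))
  have dW {d : Derivation ℝ R R} (hd : d = dx ∨ d = dy) : d W ∈ Algebra.adjoin ℝ S := by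
    rw [der_W d hj.sq hj.inv]
    exact mul_mem (s hν) (dpq hd)
  have dν {d : Derivation ℝ R R} (hd : d = dx ∨ d = dy) : d ν ∈ Algebra.adjoin ℝ S := by
    rw [der_ν d hj.sq hj.inv]
    exact mul_mem (neg_mem (pow_mem (s hν) 3)) (dpq hd)
  -- an element whose first derivatives lie in the coefficient algebra
  have ell_of_der {g : R} (hx : dx g ∈ Algebra.adjoin ℝ S) (hy : dy g ∈ Algebra.adjoin ℝ S) :
      AffineJet dx dy S (ellOp dx dy u g) := by
    refine .add (.sub (.mul (affineJet_dx hx) ?_) ?_) (.mul (affineJet_dy hy) ?_)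
    · exact add_mem (one_mem _) (pow_mem (s hq) 2)
    · rw [← mul_assoc]
      exact .mul (affineJet_dy hx) (mul_mem (two_mem S) (mul_mem (s hp) (s hq)))
    · exact add_mem (one_mem _) (pow_mem (s hp) 2)
  have hLu : ellOp dx dy u u = (2 * H) • W ^ 3 := hj.eqn
  have dLu {d : Derivation ℝ R R} (hd : d = dx ∨ d = dy) :
      d (ellOp dx dy u u) ∈ Algebra.adjoin ℝ S := by
    rw [hLu, Derivation.map_smul, Derivation.leibniz_pow]
    exact Subalgebra.smul_mem _ (nsmul_mem (by
      rw [smul_eq_mul]; exact mul_mem (pow_mem (s hW) 2) (dW hd)) _) _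
  have Ld {d : Derivation ℝ R R} (hd : d = dx ∨ d = dy) (hx : ∀ f, d (dx f) = dx (d f))
      (hy : ∀ f, d (dy f) = dy (d f)) : ellOp dx dy u (d u) ∈ Algebra.adjoin ℝ S := by
    obtain ⟨h1, h2, h3⟩ := coefs_mem comm hp hq hr hs ht hd
    rw [ellOp_der d hx hy]
    exact sub_mem (dLu hd) (add_mem (sub_mem (mul_mem h1 (s hr)) (mul_mem h2 (s hs)))
      (mul_mem h3 (s ht)))
  have Lp := affineJet_ellOp_der comm hp hq hr hs ht (f := dx u)
    (Ld (.inl rfl) (fun _ => rfl) comm) (.derX' hr) (.derY' hr) (.derY' hs)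
  have Lq := affineJet_ellOp_der comm hp hq hr hs ht (f := dy u)
    (Ld (.inr rfl) (fun f => (comm f).symm) (fun _ => rfl)) (by rw [comm]; exact .derX' hs)
      (by rw [comm]; exact .derY' hs) (.derY' ht)
  rw [← hS]
  refine ⟨hp, hq, hr, hs, ht, fun f hf => ?_⟩
  rw [hS] at hf
  rcases hf with rfl | rfl | rfl | rfl | rfl | rfl | rfl | rfl
  · exact ell_of_der (s hp) (s hq)
  · exact ell_of_der (dW (.inl rfl)) (dW (.inr rfl))
  · exact ell_of_der (dν (.inl rfl)) (dν (.inr rfl))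
  · exact ell_of_der (s hr) (s hs)
  · exact ell_of_der (d2 (.inl rfl)) (s ht)
  · exact Lp.1
  · exact Lp.2
  · exact Lq.2
end Abs

end Prolongation

/-! ### The Bernstein inequality -/

section Bernstein

open TopologicalSpace

section Energy
variable {R : Type*} [CommRing R] [Algebra ℝ R] (dx dy : Derivation ℝ R R) (u : R) (s : Finset R)

/-- Sum of the squared gradients of the members of `s`. -/
def energy1 : R := ∑ f ∈ s, (dx f * dx f + dy f * dy f)

/-- Sum of the squared Hessians of the members of `s`. -/
def energy2 : R := ∑ f ∈ s, ((dx (dx f) * dx (dx f) + dy (dx f) * dy (dx f)) +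
  (dx (dy f) * dx (dy f) + dy (dy f) * dy (dy f)))

/-- Sum of the squares of the members of `s`. -/
def energy0 : R := ∑ f ∈ s, f * f

lemma ellOp_energy0 : ellOp dx dy u (energy0 s) =
    2 * (∑ f ∈ s, gradBil dx dy u f f) + 2 * (∑ f ∈ s, f * ellOp dx dy u f) := by
  rw [energy0, ellOp_sum, Finset.mul_sum, Finset.mul_sum, ← Finset.sum_add_distrib]
  refine Finset.sum_congr rfl fun f _ => ?_
  rw [ellOp_mul]; ring

lemma ellOp_energy1 : ellOp dx dy u (energy1 dx dy s) =
    2 * (∑ f ∈ s, (gradBil dx dy u (dx f) (dx f) + gradBil dx dy u (dy f) (dy f))) +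
    2 * (∑ f ∈ s, (dx f * ellOp dx dy u (dx f) + dy f * ellOp dx dy u (dy f))) := by
  rw [energy1, ellOp_sum, Finset.mul_sum, Finset.mul_sum, ← Finset.sum_add_distrib]
  refine Finset.sum_congr rfl fun f _ => ?_
  rw [ellOp_add, ellOp_mul, ellOp_mul]; ring

lemma der_energy0 (d : Derivation ℝ R R) : d (energy0 s) = 2 * ∑ f ∈ s, f * d f := by
  rw [energy0, map_sum, Finset.mul_sum]
  refine Finset.sum_congr rfl fun f _ => ?_
  simp only [Derivation.leibniz, smul_eq_mul]; ring

lemma der_energy1 (d : Derivation ℝ R R) : d (energy1 dx dy s) =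
    2 * ∑ f ∈ s, (dx f * d (dx f) + dy f * d (dy f)) := by
  rw [energy1, map_sum, Finset.mul_sum]
  refine Finset.sum_congr rfl fun f _ => ?_
  simp only [map_add, Derivation.leibniz, smul_eq_mul]; ring

lemma ellOp_bernstein (c : ℝ) (f g : R) : ellOp dx dy u (f * (algebraMap ℝ R c + g)) =
    (algebraMap ℝ R c + g) * ellOp dx dy u f + f * ellOp dx dy u g
      + 2 * gradBil dx dy u f g := by
  have h0 : ellOp dx dy u (algebraMap ℝ R c) = 0 := by simp [ellOp]
  have h1 : gradBil dx dy u f (algebraMap ℝ R c + g) = gradBil dx dy u f g := by simp [gradBil]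
  rw [ellOp_mul, ellOp_add, h0, h1]
  ring

end Energy

/-- Absorption of error terms in the Bernstein inequality. Here `x`, `y` are the norms of the
gradient and the Hessian of the system, `R` the value of `energy0`, `G₁`, `G₂` the good terms of
`L energy1` and `L energy0`, `E₁`, `E₂` the corresponding error terms, and `B` the cross term. -/
lemma bernstein_real {Λ C R G₁ G₂ E₁ E₂ B x y : ℝ} (hR : 0 ≤ R) (hRΛ : R ≤ Λ)
    (hΛ : 4 * C ^ 2 ≤ Λ) (hΛ1 : 1 ≤ Λ) (hG₁ : y ^ 2 ≤ G₁) (hG₂ : x ^ 2 ≤ G₂)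
    (hE₁ : |E₁| ≤ C * (x * (1 + x ^ 2 + y))) (hE₂ : |E₂| ≤ C * (1 + x)) (hB : |B| ≤ C * (x ^ 2 * y)) :
    x ^ 4 - ((2 * C + 4 * Λ * C ^ 2 + (2 * C + 4 * Λ * C) ^ 2 + 1) ^ 2 + (4 * Λ * C) ^ 2) ≤
      (Λ + R) * (2 * G₁ + 2 * E₁) + x ^ 2 * (2 * G₂ + 2 * E₂) + 2 * B := by
  have e1 : - (2 * Λ * (C * (x * (1 + x ^ 2 + y)))) ≤ (Λ + R) * E₁ := by
    have h1 : |(Λ + R) * E₁| ≤ 2 * Λ * (C * (x * (1 + x ^ 2 + y))) := by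
      rw [abs_mul, abs_of_nonneg (by linarith : 0 ≤ Λ + R)]
      exact mul_le_mul (by linarith) hE₁ (abs_nonneg _) (by linarith)
    exact (abs_le.1 h1).1
  have e2 : - (x ^ 2 * (C * (1 + x))) ≤ x ^ 2 * E₂ := by
    have := mul_le_mul_of_nonneg_left (abs_le.1 hE₂).1 (sq_nonneg x)
    linarith
  have e3 := (abs_le.1 hB).1
  have g1 : Λ * y ^ 2 ≤ (Λ + R) * G₁ :=
    mul_le_mul (by linarith) hG₁ (sq_nonneg _) (by linarith)
  have g2 : x ^ 2 * x ^ 2 ≤ x ^ 2 * G₂ := mul_le_mul_of_nonneg_left hG₂ (sq_nonneg x)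
  -- absorption of the mixed terms into `Λ y²`
  have a1 : 4 * Λ * C * (x * y) ≤ Λ * y ^ 2 + 4 * Λ * C ^ 2 * x ^ 2 := by
    nlinarith [mul_nonneg (by linarith : 0 ≤ Λ) (sq_nonneg (y - 2 * C * x))]
  have a2 : 2 * C * (x ^ 2 * y) ≤ Λ * y ^ 2 + x ^ 4 / 4 := by
    nlinarith [sq_nonneg (2 * C * y - x ^ 2 / 2), mul_le_mul_of_nonneg_right hΛ (sq_nonneg y)]
  -- lower powers of `x` are absorbed into `x⁴`
  obtain ⟨a, ha⟩ : ∃ a, a = 2 * C + 4 * Λ * C := ⟨_, rfl⟩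
  obtain ⟨b, hb⟩ : ∃ b, b = 2 * C + 4 * Λ * C ^ 2 + a ^ 2 + 1 := ⟨_, rfl⟩
  have a3 : a * x ^ 3 ≤ x ^ 4 / 4 + a ^ 2 * x ^ 2 := by
    nlinarith [sq_nonneg (x ^ 2 / 2 - a * x)]
  have a4 : b * x ^ 2 ≤ x ^ 4 / 4 + b ^ 2 := by
    nlinarith [sq_nonneg (x ^ 2 / 2 - b)]
  have a5 : 4 * Λ * C * x ≤ x ^ 2 + (4 * Λ * C) ^ 2 := by
    nlinarith [sq_nonneg (x - 4 * Λ * C), sq_nonneg x, sq_nonneg (4 * Λ * C)]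
  rw [← ha, ← hb]
  have x4 : 0 ≤ x ^ 4 := by positivity
  have ea : a * x ^ 3 = 2 * C * x ^ 3 + 4 * Λ * C * x ^ 3 := by rw [ha]; ring
  have eb : b * x ^ 2 = 2 * C * x ^ 2 + 4 * Λ * C ^ 2 * x ^ 2 + a ^ 2 * x ^ 2 + x ^ 2 := by
    rw [hb]; ring
  linarith

variable {Ω : Opens (ℝ × ℝ)} {H : ℝ} {u W ν : SmoothFam Ω}

/-- The family `g` is bounded by a constant multiple of `G` on `K`, uniformly in `n`. -/
def Dominated (K : Set (ℝ × ℝ)) (g : SmoothFam Ω) (G : ℕ → Ω → ℝ) : Prop :=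
  ∃ C, 0 ≤ C ∧ ∀ n (x : Ω), (x : ℝ × ℝ) ∈ K → |evAt n x g| ≤ C * G n x

namespace Dominated
variable {K : Set (ℝ × ℝ)} {f g : SmoothFam Ω} {F G : ℕ → Ω → ℝ}

lemma add (hf : Dominated K f G) (hg : Dominated K g G) : Dominated K (f + g) G := by
  obtain ⟨C, hC0, hC⟩ := hf
  obtain ⟨D, hD0, hD⟩ := hg
  refine ⟨C + D, add_nonneg hC0 hD0, fun n x hx => ?_⟩
  rw [map_add, add_mul]
  exact (abs_add_le _ _).trans (add_le_add (hC n x hx) (hD n x hx))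

lemma mul (hf : Dominated K f F) (hg : Dominated K g G) :
    Dominated K (f * g) (fun n x => F n x * G n x) := by
  obtain ⟨C, hC0, hC⟩ := hf
  obtain ⟨D, hD0, hD⟩ := hg
  refine ⟨C * D, mul_nonneg hC0 hD0, fun n x hx => ?_⟩
  rw [map_mul, abs_mul]
  exact (mul_le_mul (hC n x hx) (hD n x hx) (abs_nonneg _)
    ((abs_nonneg _).trans (hC n x hx))).trans_eq (by ring)

lemma neg (hf : Dominated K f G) : Dominated K (-f) G := by
  obtain ⟨C, hC0, hC⟩ := hf
  refine ⟨C, hC0, fun n x hx => ?_⟩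
  rw [map_neg, abs_neg]
  exact hC n x hx

lemma sub (hf : Dominated K f G) (hg : Dominated K g G) : Dominated K (f - g) G := by
  rw [sub_eq_add_neg]; exact hf.add hg.neg

lemma mono (hf : Dominated K f F) (c : ℝ) (hc : 0 ≤ c) (h : ∀ n x, F n x ≤ c * G n x) : Dominated K f G := by
  obtain ⟨C, hC0, hC⟩ := hf
  refine ⟨C * c, mul_nonneg hC0 hc, fun n x hx => (hC n x hx).trans ?_⟩
  rw [mul_assoc]
  exact mul_le_mul_of_nonneg_left (h n x) hC0

lemma zero (hG : ∀ n x, 0 ≤ G n x) : Dominated (Ω := Ω) K 0 G :=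
  ⟨1, zero_le_one, fun n x _ => by simpa using hG n x⟩

lemma sum {s : Finset (SmoothFam Ω)} {F : SmoothFam Ω → SmoothFam Ω} (hG : ∀ n x, 0 ≤ G n x)
    (h : ∀ f ∈ s, Dominated K (F f) G) : Dominated K (∑ f ∈ s, F f) G :=
  Finset.sum_induction F (fun g => Dominated K g G) (fun _ _ => add) (zero hG) h

lemma of_locBdd (hf : f ∈ LocBdd Ω) (hK : IsCompact K) (hKΩ : K ⊆ Ω) :
    Dominated K f (fun _ _ => 1) := by
  obtain ⟨C, hC0, hC⟩ := LocBdd.exists_pos hf hK hKΩ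
  exact ⟨C, hC0.le, fun n x hx => by rw [mul_one]; exact hC n x hx⟩

lemma locBdd_mul (ha : f ∈ LocBdd Ω) (hK : IsCompact K) (hKΩ : K ⊆ Ω) (hg : Dominated K g G) :
    Dominated K (f * g) G := by
  simpa using (of_locBdd ha hK hKΩ).mul hg

lemma of_sq_le (h : ∀ n x, evAt n x f ^ 2 ≤ F n x) : Dominated K f (fun n x => √(F n x)) :=
  ⟨1, zero_le_one, fun n x _ => by rw [one_mul]; exact Real.abs_le_sqrt (h n x)⟩

end Dominated

end Bernstein

/-! ### Domination by gradients and Hessians -/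

section Domination

open TopologicalSpace

variable {Ω : Opens (ℝ × ℝ)} {H : ℝ} {u W ν : SmoothFam Ω} {s : Finset (SmoothFam Ω)}

/-- The norm of the gradient of the system `s`, at a point. -/
def gradNorm (s : Finset (SmoothFam Ω)) (n : ℕ) (x : Ω) : ℝ :=
  √(evAt n x (energy1 (R := SmoothFam Ω) dX dY s))

/-- The norm of the Hessian of the system `s`, at a point. -/
def hessNorm (s : Finset (SmoothFam Ω)) (n : ℕ) (x : Ω) : ℝ :=
  √(evAt n x (energy2 (R := SmoothFam Ω) dX dY s))

lemma gradNorm_nonneg (n : ℕ) (x : Ω) : 0 ≤ gradNorm s n x := Real.sqrt_nonneg _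
lemma hessNorm_nonneg (n : ℕ) (x : Ω) : 0 ≤ hessNorm s n x := Real.sqrt_nonneg _

lemma ev_energy1 (n : ℕ) (x : Ω) : evAt n x (energy1 (R := SmoothFam Ω) dX dY s) =
    ∑ f ∈ s, (evAt n x (dX f) ^ 2 + evAt n x (dY f) ^ 2) := by
  simp only [energy1, map_sum, map_add, map_mul, pow_two]

lemma ev_energy2 (n : ℕ) (x : Ω) : evAt n x (energy2 (R := SmoothFam Ω) dX dY s) =
    ∑ f ∈ s, ((evAt n x (dX (dX f)) ^ 2 + evAt n x (dY (dX f)) ^ 2) +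
      (evAt n x (dX (dY f)) ^ 2 + evAt n x (dY (dY f)) ^ 2)) := by
  simp only [energy2, map_sum, map_add, map_mul, pow_two]

lemma ev_energy0 (n : ℕ) (x : Ω) : evAt n x (energy0 (R := SmoothFam Ω) s) =
    ∑ f ∈ s, evAt n x f ^ 2 := by
  simp only [energy0, map_sum, map_mul, pow_two]

lemma gradNorm_sq (n : ℕ) (x : Ω) :
    gradNorm s n x ^ 2 = evAt n x (energy1 (R := SmoothFam Ω) dX dY s) := by
  refine Real.sq_sqrt ?_
  rw [ev_energy1]
  exact Finset.sum_nonneg fun f _ => by positivity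

lemma hessNorm_sq (n : ℕ) (x : Ω) :
    hessNorm s n x ^ 2 = evAt n x (energy2 (R := SmoothFam Ω) dX dY s) := by
  refine Real.sq_sqrt ?_
  rw [ev_energy2]
  exact Finset.sum_nonneg fun f _ => by positivity

variable {K : Set (ℝ × ℝ)}

lemma first_le_energy1 {f : SmoothFam Ω} (hf : f ∈ s) (n : ℕ) (x : Ω) :
    evAt n x (dX f) ^ 2 + evAt n x (dY f) ^ 2 ≤ evAt n x (energy1 (R := SmoothFam Ω) dX dY s) := by
  rw [ev_energy1]
  exact Finset.single_le_sum
    (f := fun f => evAt n x (dX f) ^ 2 + evAt n x (dY f) ^ 2) (fun f _ => by positivity) hf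

lemma second_le_energy2 {f : SmoothFam Ω} (hf : f ∈ s) (n : ℕ) (x : Ω) :
    ((evAt n x (dX (dX f)) ^ 2 + evAt n x (dY (dX f)) ^ 2) +
      (evAt n x (dX (dY f)) ^ 2 + evAt n x (dY (dY f)) ^ 2)) ≤
      evAt n x (energy2 (R := SmoothFam Ω) dX dY s) := by
  rw [ev_energy2]
  exact Finset.single_le_sum
    (f := fun f => ((evAt n x (dX (dX f)) ^ 2 + evAt n x (dY (dX f)) ^ 2) +
      (evAt n x (dX (dY f)) ^ 2 + evAt n x (dY (dY f)) ^ 2))) (fun f _ => by positivity) hf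

lemma dominated_first {f : SmoothFam Ω} (hf : f ∈ s) :
    Dominated K (dX f) (gradNorm s) ∧ Dominated K (dY f) (gradNorm s) := by
  constructor <;> refine Dominated.of_sq_le fun n x => ?_ <;>
  · have := first_le_energy1 hf n x
    have h1 := sq_nonneg (evAt n x (dX f))
    have h2 := sq_nonneg (evAt n x (dY f))
    linarith

lemma dominated_second {f : SmoothFam Ω} (hf : f ∈ s) :
    Dominated K (dX (dX f)) (hessNorm s) ∧ Dominated K (dY (dX f)) (hessNorm s) ∧
    Dominated K (dY (dY f)) (hessNorm s) := by
  refine ⟨?_, ?_, ?_⟩ <;> refine Dominated.of_sq_le fun n x => ?_ <;>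
  · have := second_le_energy2 hf n x
    have h1 := sq_nonneg (evAt n x (dX (dX f)))
    have h2 := sq_nonneg (evAt n x (dY (dX f)))
    have h3 := sq_nonneg (evAt n x (dX (dY f)))
    have h4 := sq_nonneg (evAt n x (dY (dY f)))
    linarith

lemma adjoin_le_LocBdd (hs : ∀ f ∈ s, f ∈ LocBdd Ω) {a : SmoothFam Ω}
    (ha : a ∈ Algebra.adjoin ℝ (s : Set (SmoothFam Ω))) : a ∈ LocBdd Ω :=
  Algebra.adjoin_le (S := LocBdd Ω) (fun f hf => hs f hf) ha

lemma dominated_affineJet (hs : ∀ f ∈ s, f ∈ LocBdd Ω) (hK : IsCompact K) (hKΩ : K ⊆ Ω)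
    {m : SmoothFam Ω} (hm : AffineJet (R := SmoothFam Ω) dX dY (s : Set (SmoothFam Ω)) m) :
    Dominated K m (fun n x => 1 + gradNorm s n x) := by
  have hle : ∀ n (x : Ω), gradNorm s n x ≤ 1 * (1 + gradNorm s n x) := fun n x => by linarith
  induction hm with
  | coef ha =>
    refine (Dominated.of_locBdd (adjoin_le_LocBdd hs ha) hK hKΩ).mono 1 zero_le_one fun n x => ?_
    linarith [gradNorm_nonneg (s := s) n x]
  | derX ha hf =>
    exact ((dominated_first hf).1.locBdd_mul (adjoin_le_LocBdd hs ha) hK hKΩ).mono 1 zero_le_one hle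
  | derY ha hf =>
    exact ((dominated_first hf).2.locBdd_mul (adjoin_le_LocBdd hs ha) hK hKΩ).mono 1 zero_le_one hle
  | add _ _ h1 h2 => exact h1.add h2

lemma dominated_der_affineJet (hs : ∀ f ∈ s, f ∈ LocBdd Ω) (hK : IsCompact K) (hKΩ : K ⊆ Ω)
    {d : Derivation ℝ (SmoothFam Ω) (SmoothFam Ω)} (hd : d = dX ∨ d = dY)
    {m : SmoothFam Ω} (hm : AffineJet (R := SmoothFam Ω) dX dY (s : Set (SmoothFam Ω)) m) :
    Dominated K (d m) (fun n x => 1 + gradNorm s n x ^ 2 + hessNorm s n x) := by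
  have hda {a : SmoothFam Ω} (ha : a ∈ Algebra.adjoin ℝ (s : Set (SmoothFam Ω))) :
      Dominated K (d a) (fun n x => 1 + gradNorm s n x) := by
    refine dominated_affineJet hs hK hKΩ ?_
    rcases hd with rfl | rfl
    exacts [affineJet_dx ha, affineJet_dy ha]
  have hprod {a g : SmoothFam Ω} (ha : a ∈ Algebra.adjoin ℝ (s : Set (SmoothFam Ω)))
      (h1 : Dominated K g (gradNorm s)) (h2 : Dominated K (d g) (hessNorm s)) :
      Dominated K (d (a * g)) (fun n x => 1 + gradNorm s n x ^ 2 + hessNorm s n x) := by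
    rw [Derivation.leibniz, smul_eq_mul, smul_eq_mul]
    refine .add ?_ ?_
    · refine (h2.locBdd_mul (adjoin_le_LocBdd hs ha) hK hKΩ).mono 1 zero_le_one fun n x => ?_
      nlinarith [gradNorm_nonneg (s := s) n x]
    · refine (h1.mul (hda ha)).mono 2 zero_le_two fun n x => ?_
      nlinarith [gradNorm_nonneg (s := s) n x, hessNorm_nonneg (s := s) n x,
        sq_nonneg (gradNorm s n x - 1)]
  induction hm with
  | coef ha =>
    refine (hda ha).mono 2 zero_le_two fun n x => ?_
    nlinarith [hessNorm_nonneg (s := s) n x, sq_nonneg (gradNorm s n x - 1)]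
  | @derX a f ha hf =>
    refine hprod ha (dominated_first hf).1 ?_
    rcases hd with rfl | rfl
    exacts [(dominated_second hf).1, (dominated_second hf).2.1]
  | @derY a f ha hf =>
    refine hprod ha (dominated_first hf).2 ?_
    rcases hd with rfl | rfl
    · rw [dX_dY_comm]; exact (dominated_second hf).2.1
    · exact (dominated_second hf).2.2
  | add _ _ h1 h2 => rw [map_add]; exact h1.add h2

lemma dominated_ellOp_der (hs : ∀ f ∈ s, f ∈ LocBdd Ω) (hK : IsCompact K) (hKΩ : K ⊆ Ω)
    (hS : IsClosedSystem (R := SmoothFam Ω) dX dY u (s : Set (SmoothFam Ω)))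
    {d : Derivation ℝ (SmoothFam Ω) (SmoothFam Ω)} (hd : d = dX ∨ d = dY) {f : SmoothFam Ω}
    (hf : f ∈ s) : Dominated K (ellOp (R := SmoothFam Ω) dX dY u (d f))
      (fun n x => 1 + gradNorm s n x ^ 2 + hessNorm s n x) := by
  have hx : ∀ f, d (dX f) = dX (d f) := by
    rcases hd with rfl | rfl
    exacts [fun _ => rfl, fun f => (dX_dY_comm f).symm]
  have hy : ∀ f, d (dY f) = dY (d f) := by
    rcases hd with rfl | rfl
    exacts [dX_dY_comm, fun _ => rfl]
  rw [ellOp_der (R := SmoothFam Ω) d hx hy]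
  obtain ⟨h1, h2, h3⟩ := coefs_mem (R := SmoothFam Ω) (dx := dX) (dy := dY) (u := u)
    (S := (s : Set (SmoothFam Ω))) dX_dY_comm hS.p_mem hS.q_mem hS.r_mem hS.s_mem hS.t_mem hd
  obtain ⟨e1, e2, e3⟩ := dominated_second (K := K) hf
  refine .sub (dominated_der_affineJet hs hK hKΩ hd (hS.ell_mem f hf)) ?_
  refine Dominated.mono (F := hessNorm s) (.add (.sub ?_ ?_) ?_) 1 zero_le_one fun n x => ?_
  · exact e1.locBdd_mul (adjoin_le_LocBdd hs h1) hK hKΩ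
  · exact e2.locBdd_mul (adjoin_le_LocBdd hs h2) hK hKΩ
  · exact e3.locBdd_mul (adjoin_le_LocBdd hs h3) hK hKΩ
  · nlinarith [gradNorm_nonneg (s := s) n x]

/-- The error term in `L energy1`, see `ellOp_energy1`. -/
lemma dominated_E₁ (hs : ∀ f ∈ s, f ∈ LocBdd Ω) (hK : IsCompact K) (hKΩ : K ⊆ Ω)
    (hS : IsClosedSystem (R := SmoothFam Ω) dX dY u (s : Set (SmoothFam Ω))) :
    Dominated K (∑ f ∈ s, (dX f * ellOp (R := SmoothFam Ω) dX dY u (dX f) +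
      dY f * ellOp (R := SmoothFam Ω) dX dY u (dY f)))
      (fun n x => gradNorm s n x * (1 + gradNorm s n x ^ 2 + hessNorm s n x)) := by
  refine Dominated.sum (fun n x => ?_) fun f hf => .add ?_ ?_
  · have := gradNorm_nonneg (s := s) n x
    have := hessNorm_nonneg (s := s) n x
    positivity
  · exact (dominated_first hf).1.mul (dominated_ellOp_der hs hK hKΩ hS (.inl rfl) hf)
  · exact (dominated_first hf).2.mul (dominated_ellOp_der hs hK hKΩ hS (.inr rfl) hf)

/-- The error term in `L energy0`, see `ellOp_energy0`. -/
lemma dominated_E₂ (hs : ∀ f ∈ s, f ∈ LocBdd Ω) (hK : IsCompact K) (hKΩ : K ⊆ Ω)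
    (hS : IsClosedSystem (R := SmoothFam Ω) dX dY u (s : Set (SmoothFam Ω))) :
    Dominated K (∑ f ∈ s, f * ellOp (R := SmoothFam Ω) dX dY u f)
      (fun n x => 1 + gradNorm s n x) := by
  refine Dominated.sum (fun n x => ?_) fun f hf => ?_
  · have := gradNorm_nonneg (s := s) n x
    positivity
  · exact (dominated_affineJet hs hK hKΩ (hS.ell_mem f hf)).locBdd_mul (hs f hf) hK hKΩ

/-- The cross term in `L (energy1 (Λ + energy0))`, see `ellOp_bernstein`. -/
lemma dominated_B (hs : ∀ f ∈ s, f ∈ LocBdd Ω) (hK : IsCompact K) (hKΩ : K ⊆ Ω)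
    (hp : dX u ∈ LocBdd Ω) (hq : dY u ∈ LocBdd Ω) :
    Dominated K (gradBil (R := SmoothFam Ω) dX dY u (energy1 (R := SmoothFam Ω) dX dY s)
      (energy0 (R := SmoothFam Ω) s)) (fun n x => gradNorm s n x ^ 2 * hessNorm s n x) := by
  have two : (2 : SmoothFam Ω) ∈ LocBdd Ω := ofNat_mem _ 2
  have h0 {d : Derivation ℝ (SmoothFam Ω) (SmoothFam Ω)} (hd : d = dX ∨ d = dY) :
      Dominated K (d (energy0 (R := SmoothFam Ω) s)) (gradNorm s) := by
    rw [der_energy0]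
    refine .locBdd_mul two hK hKΩ (.sum gradNorm_nonneg fun f hf => .locBdd_mul (hs f hf) hK hKΩ ?_)
    rcases hd with rfl | rfl
    exacts [(dominated_first hf).1, (dominated_first hf).2]
  have h1 {d : Derivation ℝ (SmoothFam Ω) (SmoothFam Ω)} (hd : d = dX ∨ d = dY) :
      Dominated K (d (energy1 (R := SmoothFam Ω) dX dY s))
        (fun n x => gradNorm s n x * hessNorm s n x) := by
    rw [der_energy1]
    refine .locBdd_mul two hK hKΩ (.sum (fun n x => mul_nonneg (gradNorm_nonneg n x)
      (hessNorm_nonneg n x)) fun f hf => ?_)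
    obtain ⟨e1, e2, e3⟩ := dominated_second (K := K) hf
    rcases hd with rfl | rfl
    · exact .add ((dominated_first hf).1.mul e1)
        ((dominated_first hf).2.mul (by rw [dX_dY_comm]; exact e2))
    · exact .add ((dominated_first hf).1.mul e2) ((dominated_first hf).2.mul e3)
  have h10 {d d' : Derivation ℝ (SmoothFam Ω) (SmoothFam Ω)} (hd : d = dX ∨ d = dY)
      (hd' : d' = dX ∨ d' = dY) : Dominated K (d (energy1 (R := SmoothFam Ω) dX dY s) *
        d' (energy0 (R := SmoothFam Ω) s)) (fun n x => gradNorm s n x ^ 2 * hessNorm s n x) :=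
    ((h1 hd).mul (h0 hd')).mono 1 zero_le_one fun n x => le_of_eq (by ring)
  rw [gradBil]
  refine .add (.sub ?_ ?_) ?_
  · exact .locBdd_mul (add_mem (one_mem _) (pow_mem hq 2)) hK hKΩ (h10 (.inl rfl) (.inl rfl))
  · exact .locBdd_mul (mul_mem hp hq) hK hKΩ
      ((h10 (.inl rfl) (.inr rfl)).add (h10 (.inr rfl) (.inl rfl)))
  · exact .locBdd_mul (add_mem (one_mem _) (pow_mem hp 2)) hK hKΩ (h10 (.inr rfl) (.inr rfl))

/-- The operator `ellOp` is uniformly elliptic from below, with constant `1`. -/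
lemma gradBil_self_ge (f : SmoothFam Ω) (n : ℕ) (x : Ω) : evAt n x (dX f) ^ 2 + evAt n x (dY f) ^ 2 ≤
    evAt n x (gradBil (R := SmoothFam Ω) dX dY u f f) := by
  simp only [gradBil, map_add, map_sub, map_mul, map_pow, map_one]
  nlinarith [sq_nonneg (evAt n x (dY u) * evAt n x (dX f) - evAt n x (dX u) * evAt n x (dY f))]

end Domination

/-! ### Interior estimates of all orders -/

section Interior

open TopologicalSpace

variable {Ω : Opens (ℝ × ℝ)} {H : ℝ} {u W ν : SmoothFam Ω} {s : Finset (SmoothFam Ω)}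

/-- The Bernstein inequality: for `Λ` large, `L (energy1 (Λ + energy0)) ≥ energy1² - C`. -/
lemma ellOp_bernstein_ge {K : Set (ℝ × ℝ)} (hs : ∀ f ∈ s, f ∈ LocBdd Ω) (hK : IsCompact K) (hKΩ : K ⊆ Ω)
    (hS : IsClosedSystem (R := SmoothFam Ω) dX dY u (s : Set (SmoothFam Ω))) :
    ∃ Λ C, 0 < Λ ∧ 0 ≤ C ∧ ∀ n (x : Ω), (x : ℝ × ℝ) ∈ K →
      0 ≤ evAt n x (energy0 (R := SmoothFam Ω) s) ∧ evAt n x (energy0 (R := SmoothFam Ω) s) ≤ Λ ∧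
      evAt n x (energy1 (R := SmoothFam Ω) dX dY s) ^ 2 - C ≤
        evAt n x (ellOp (R := SmoothFam Ω) dX dY u (energy1 (R := SmoothFam Ω) dX dY s *
          (algebraMap ℝ (SmoothFam Ω) Λ + energy0 (R := SmoothFam Ω) s))) := by
  obtain ⟨C₁, hC₁0, hC₁⟩ := dominated_E₁ hs hK hKΩ hS
  obtain ⟨C₂, hC₂0, hC₂⟩ := dominated_E₂ hs hK hKΩ hS
  obtain ⟨C₃, hC₃0, hC₃⟩ := dominated_B hs hK hKΩ (hs _ hS.p_mem) (hs _ hS.q_mem)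
  have h0 : energy0 (R := SmoothFam Ω) s ∈ LocBdd Ω :=
    sum_mem fun f hf => mul_mem (hs f hf) (hs f hf)
  obtain ⟨C₀, hC₀0, hC₀⟩ := LocBdd.exists_pos h0 hK hKΩ
  obtain ⟨C, hC⟩ : ∃ C, C = C₁ + C₂ + C₃ := ⟨_, rfl⟩
  obtain ⟨Λ, hΛ⟩ : ∃ Λ, Λ = 1 + C₀ + 4 * C ^ 2 := ⟨_, rfl⟩
  have hC2 := sq_nonneg C
  refine ⟨Λ, ((2 * C + 4 * Λ * C ^ 2 + (2 * C + 4 * Λ * C) ^ 2 + 1) ^ 2 + (4 * Λ * C) ^ 2),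
    by linarith, by positivity, fun n x hx => ?_⟩
  have hR : 0 ≤ evAt n x (energy0 (R := SmoothFam Ω) s) := by
    rw [ev_energy0]; exact Finset.sum_nonneg fun f _ => by positivity
  have hRΛ : evAt n x (energy0 (R := SmoothFam Ω) s) ≤ Λ := by
    have := (le_abs_self _).trans (hC₀ n x hx)
    linarith
  refine ⟨hR, hRΛ, ?_⟩
  rw [ellOp_bernstein, ellOp_energy0, ellOp_energy1]
  simp only [map_add, map_mul, map_ofNat, AlgHom.commutes, Algebra.algebraMap_self, RingHom.id_apply]
  rw [← gradNorm_sq, ← pow_mul]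
  have hX := gradNorm_nonneg (s := s) n x
  have hY := hessNorm_nonneg (s := s) n x
  refine bernstein_real (y := hessNorm s n x) hR hRΛ (by linarith) (by linarith) ?_ ?_ ?_ ?_ ?_
  · rw [hessNorm_sq, ev_energy2, map_sum]
    refine Finset.sum_le_sum fun f _ => ?_
    rw [map_add]
    exact add_le_add (gradBil_self_ge _ n x) (gradBil_self_ge _ n x)
  · rw [gradNorm_sq, ev_energy1, map_sum]
    exact Finset.sum_le_sum fun f _ => gradBil_self_ge _ n x
  · refine (hC₁ n x hx).trans (mul_le_mul_of_nonneg_right (by linarith) (by positivity))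
  · refine (hC₂ n x hx).trans (mul_le_mul_of_nonneg_right (by linarith) (by positivity))
  · refine (hC₃ n x hx).trans (mul_le_mul_of_nonneg_right (by linarith) (by positivity))

/-- Gradients of a locally bounded closed system are locally bounded: since
`energy1 (Λ + energy0) ≤ 2 Λ energy1`, the Bernstein inequality is of Keller–Osserman type for
`energy1 (Λ + energy0)`, with `κ = 1 / (4 Λ²)`. -/
lemma energy1_mem_LocBdd (hs : ∀ f ∈ s, f ∈ LocBdd Ω)
    (hS : IsClosedSystem (R := SmoothFam Ω) dX dY u (s : Set (SmoothFam Ω))) :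
    energy1 (R := SmoothFam Ω) dX dY s ∈ LocBdd Ω := by
  intro K hK hKΩ
  obtain ⟨r, hr, K', hK', hK'Ω, hd⟩ := exists_disk_nhd hK hKΩ
  obtain ⟨Λ, C, hΛ, hC, hest⟩ := ellOp_bernstein_ge hs hK' hK'Ω hS
  have hp := hs _ hS.p_mem
  have hq := hs _ hS.q_mem
  obtain ⟨A₁, hA₁0, hA₁⟩ := LocBdd.exists_pos (add_mem (one_mem _) (pow_mem hp 2)) hK' hK'Ω
  obtain ⟨A₂, hA₂0, hA₂⟩ := LocBdd.exists_pos (add_mem (one_mem _) (pow_mem hq 2)) hK' hK'Ω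
  obtain ⟨C', hC'⟩ := keller_osserman (Ω := Ω) r (A₁ + A₂) (1 / (4 * Λ ^ 2)) C hr (by positivity)
    (by positivity) hC
  obtain ⟨P, hP⟩ : ∃ P, P = energy1 (R := SmoothFam Ω) dX dY s := ⟨_, rfl⟩
  obtain ⟨R, hR⟩ : ∃ R, R = energy0 (R := SmoothFam Ω) s := ⟨_, rfl⟩
  have hP0 : ∀ n (x : Ω), 0 ≤ evAt n x P := fun n x => by
    rw [hP, ← gradNorm_sq]; positivity
  rw [← hP]
  rw [← hP, ← hR] at hest
  refine ⟨C' / Λ, fun n x₀ hx₀ => ?_⟩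
  have hD := hd x₀ hx₀
  rw [abs_of_nonneg (hP0 n x₀), le_div_iff₀ hΛ]
  have hev : ∀ x : Ω, evAt n x (P * (algebraMap ℝ (SmoothFam Ω) Λ + R)) =
      evAt n x P * (Λ + evAt n x R) := fun x => by
    simp only [map_add, map_mul, AlgHom.commutes, Algebra.algebraMap_self, RingHom.id_apply]
  have main : evAt n x₀ (P * (algebraMap ℝ (SmoothFam Ω) Λ + R)) ≤ C' := by
    refine hC' n x₀ _ (fun x => 1 + evAt n x (dY u) ^ 2)
      (fun x => - (evAt n x (dX u) * evAt n x (dY u))) (fun x => 1 + evAt n x (dX u) ^ 2)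
      (fun _ => 0) (fun _ => 0) (hD.trans hK'Ω) (fun x hx => ?_) (fun x hx _ => ?_)
    · have h1 := (le_abs_self _).trans (hA₁ n x (hD hx))
      have h2 := (le_abs_self _).trans (hA₂ n x (hD hx))
      simp only [map_add, map_one, map_pow] at h1 h2
      have hp2 := sq_nonneg (evAt n x (dX u))
      have hq2 := sq_nonneg (evAt n x (dY u))
      refine ⟨by positivity, by nlinarith, by linarith, by linarith, ?_, ?_⟩ <;>
        rw [abs_zero] <;> positivity
    · obtain ⟨e1, e2, e3⟩ := hest n x (hD hx)
      have h1 : evAt n x (P * (algebraMap ℝ (SmoothFam Ω) Λ + R)) ^ 2 ≤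
          4 * Λ ^ 2 * evAt n x P ^ 2 := by
        rw [hev]
        have h2 : evAt n x P * (Λ + evAt n x R) ≤ evAt n x P * (2 * Λ) :=
          mul_le_mul_of_nonneg_left (by linarith) (hP0 n x)
        have h3 : 0 ≤ evAt n x P * (Λ + evAt n x R) := mul_nonneg (hP0 n x) (by linarith)
        calc _ ≤ (evAt n x P * (2 * Λ)) ^ 2 := by gcongr
          _ = _ := by ring
      have h2 : 1 / (4 * Λ ^ 2) * evAt n x (P * (algebraMap ℝ (SmoothFam Ω) Λ + R)) ^ 2 ≤
          evAt n x P ^ 2 := by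
        rw [div_mul_eq_mul_div, one_mul, div_le_iff₀ (by positivity)]
        linarith
      refine (sub_le_sub_right h2 C).trans (e3.trans (le_of_eq ?_))
      generalize P * (algebraMap ℝ (SmoothFam Ω) Λ + R) = F
      simp only [ellOp, map_add, map_sub, map_mul, map_pow, map_one, map_ofNat]
      ring
  rw [hev] at main
  have h0 := mul_nonneg (hP0 n x₀) (hest n x₀ (hD ?_)).1
  · linarith
  · simp [disk, sq_nonneg]

lemma derivatives_mem_LocBdd (hs : ∀ f ∈ s, f ∈ LocBdd Ω)
    (hS : IsClosedSystem (R := SmoothFam Ω) dX dY u (s : Set (SmoothFam Ω))) {f : SmoothFam Ω}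
    (hf : f ∈ s) : dX f ∈ LocBdd Ω ∧ dY f ∈ LocBdd Ω := by
  constructor <;> refine LocBdd.of_sq_le (energy1_mem_LocBdd hs hS) fun n x => ?_ <;>
  · have := first_le_energy1 hf n x
    have h1 := sq_nonneg (evAt n x (dX f))
    have h2 := sq_nonneg (evAt n x (dY f))
    linarith

/-- All iterated partial derivatives of order at most `k` are locally bounded, uniformly in the
index of the family. -/
def LocBddDer : ℕ → SmoothFam Ω → Prop
  | 0, f => f ∈ LocBdd Ω
  | k + 1, f => f ∈ LocBdd Ω ∧ LocBddDer k (dX f) ∧ LocBddDer k (dY f)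

/-- Induction on `k` over all finite, locally bounded closed systems, prolonging at each step. -/
lemma locBddDer_of_closed (k : ℕ) : ∀ (S : Set (SmoothFam Ω)), S.Finite → (∀ f ∈ S, f ∈ LocBdd Ω) →
    IsClosedSystem (R := SmoothFam Ω) dX dY u S → ∀ f ∈ S, LocBddDer k f := by
  induction k with
  | zero => exact fun S _ hS _ f hf => hS f hf
  | succ k ih =>
    intro S hfin hS hc f hf
    obtain ⟨s, rfl⟩ := hfin.exists_finset_coe
    have key := ih (prolong (R := SmoothFam Ω) dX dY s)
      (hfin.union ((hfin.image _).union (hfin.image _))) ?_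
      (IsClosedSystem.prolong (R := SmoothFam Ω) dX_dY_comm hc)
    · exact ⟨hS f hf, key _ (dx_mem_prolong hf), key _ (dy_mem_prolong hf)⟩
    · rintro g (hg | ⟨g, hg, rfl⟩ | ⟨g, hg, rfl⟩)
      · exact hS g hg
      · exact (derivatives_mem_LocBdd hS hc hg).1
      · exact (derivatives_mem_LocBdd hS hc hg).2

/-- Interior estimates of all orders for uniformly bounded families of solutions. -/
theorem interior_estimates (hH : 0 < H) (hj : IsCMCJet (R := SmoothFam Ω) H dX dY u W ν)
    (hW : ∀ n x, 0 < evAt n x W) {M : ℝ} (hM : ∀ n x, |evAt n x u| ≤ M) (k : ℕ) :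
    LocBddDer k u := by
  have hWb := W_mem_LocBdd hH hj hW hM
  have h2 := second_derivatives_mem_LocBdd hH hj hW hWb
  refine locBddDer_of_closed (u := u) k (baseSystem (R := SmoothFam Ω) dX dY u W ν) ?_ ?_
    (baseSystem_closed (R := SmoothFam Ω) hj) u (.inl rfl)
  · simp [baseSystem]
  · intro f hf
    rcases hf with rfl | rfl | rfl | rfl | rfl | rfl | rfl | rfl
    · exact fun _ _ _ => ⟨M, fun n x _ => hM n x⟩
    · exact hWb
    · exact ν_mem_LocBdd hj hW
    · exact dXu_mem_LocBdd hj hWb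
    · exact dYu_mem_LocBdd hj hWb
    · exact h2.1
    · exact h2.2.1
    · exact h2.2.2

end Interior

/-! ### Compactness from bounds on all jets -/

section Subsequence

open TopologicalSpace

section Compactness
variable {Ω : Set (ℝ × ℝ)} {u : ℕ → ℝ × ℝ → ℝ}

/-- All derivatives of the sequence are bounded on compact subsets of `Ω`, uniformly in `n`. -/
def JetsBounded (Ω : Set (ℝ × ℝ)) (u : ℕ → ℝ × ℝ → ℝ) : Prop :=
  ∀ k : ℕ, ∀ K : Set (ℝ × ℝ), IsCompact K → K ⊆ Ω →
    ∃ C, ∀ n, ∀ x ∈ K, ‖iteratedFDeriv ℝ k (u n) x‖ ≤ C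

lemma finDim_cmm (k : ℕ) :
    FiniteDimensional ℝ (ContinuousMultilinearMap ℝ (fun _ : Fin k => ℝ × ℝ) ℝ) :=
  FiniteDimensional.of_injective
    (ContinuousMultilinearMap.toMultilinearMapLinear :
      ContinuousMultilinearMap ℝ (fun _ : Fin k => ℝ × ℝ) ℝ →ₗ[ℝ]
        MultilinearMap ℝ (fun _ : Fin k => ℝ × ℝ) ℝ)
    ContinuousMultilinearMap.toMultilinearMap_injective

/-- Diagonal extraction, in the form of sequential compactness of a countable product of closed
balls of multilinear maps: a subsequence along which all jets converge on a countable set. -/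
lemma exists_subseq_pointwise (hb : JetsBounded Ω u) {T : Set (ℝ × ℝ)} (hT : T.Countable)
    (hTΩ : T ⊆ Ω) : ∃ φ : ℕ → ℕ, StrictMono φ ∧ ∀ k, ∀ d ∈ T,
      ∃ a, Tendsto (fun n => iteratedFDeriv ℝ k (u (φ n)) d) atTop (nhds a) := by
  have hc := hT.to_subtype
  have hC : ∀ i : ℕ × T, ∃ C, ∀ n, ‖iteratedFDeriv ℝ i.1 (u n) i.2‖ ≤ C := fun i => by
    obtain ⟨C, h⟩ := hb i.1 {(i.2 : ℝ × ℝ)} isCompact_singleton (by simpa using hTΩ i.2.2)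
    exact ⟨C, fun n => h n _ rfl⟩
  choose C hC using hC
  let U : ℕ → ∀ i : ℕ × T, ContinuousMultilinearMap ℝ (fun _ : Fin i.1 => ℝ × ℝ) ℝ :=
    fun n i => iteratedFDeriv ℝ i.1 (u n) i.2
  have hcomp : IsCompact (Set.univ.pi fun i : ℕ × T => Metric.closedBall
      (0 : ContinuousMultilinearMap ℝ (fun _ : Fin i.1 => ℝ × ℝ) ℝ) (C i)) := by
    refine isCompact_univ_pi fun i => ?_
    have := finDim_cmm i.1
    have : ProperSpace (ContinuousMultilinearMap ℝ (fun _ : Fin i.1 => ℝ × ℝ) ℝ) :=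
      FiniteDimensional.proper_real _
    exact isCompact_closedBall _ _
  obtain ⟨a, -, φ, hφ, h⟩ := hcomp.tendsto_subseq (x := U) (fun n i _ => by
    rw [mem_closedBall_zero_iff]; exact hC i n)
  refine ⟨φ, hφ, fun k d hd => ⟨a (k, ⟨d, hd⟩), ?_⟩⟩
  exact (tendsto_pi_nhds.1 h) (k, ⟨d, hd⟩)

lemma norm_fderiv_iter (f : ℝ × ℝ → ℝ) (k : ℕ) (x : ℝ × ℝ) :
    ‖fderiv ℝ (iteratedFDeriv ℝ k f) x‖ = ‖iteratedFDeriv ℝ (k + 1) f x‖ :=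
  norm_fderiv_iteratedFDeriv

/-- Convergence on a dense set upgrades to uniform Cauchy convergence on compact sets, because the
bound on derivatives of order `k + 1` makes those of order `k` equi-Lipschitz. -/
lemma uniformCauchy (hΩ : IsOpen Ω) (hu : ∀ n, ContDiffOn ℝ (⊤ : ℕ∞) (u n) Ω)
    (hb : JetsBounded Ω u) {T : Set (ℝ × ℝ)} (hT : Dense T) (k : ℕ)
    (hlim : ∀ d ∈ T ∩ Ω, ∃ a, Tendsto (fun n => iteratedFDeriv ℝ k (u n) d) atTop (nhds a))
    {K : Set (ℝ × ℝ)} (hK : IsCompact K) (hKΩ : K ⊆ Ω) :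
    UniformCauchySeqOn (fun n => iteratedFDeriv ℝ k (u n)) atTop K := by
  rw [Metric.uniformCauchySeqOn_iff]
  intro ε hε
  obtain ⟨δ, hδ, hδΩ⟩ := hK.exists_cthickening_subset_open hΩ hKΩ
  obtain ⟨C, hC⟩ := hb (k + 1) _ hK.cthickening hδΩ
  obtain ⟨ρ, hρ, hρδ, hρε⟩ : ∃ ρ, 0 < ρ ∧ ρ ≤ δ ∧ |C| * ρ ≤ ε / 4 := by
    refine ⟨min δ (ε / (4 * (|C| + 1))), lt_min hδ (by positivity), min_le_left _ _, ?_⟩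
    calc |C| * min δ (ε / (4 * (|C| + 1))) ≤ (|C| + 1) * (ε / (4 * (|C| + 1))) := by
          gcongr
          · linarith
          · exact min_le_right _ _
      _ = ε / 4 := by field_simp
  -- equi-Lipschitz bound on balls around points of `K`
  have hlip : ∀ n, ∀ x ∈ K, ∀ y ∈ Metric.ball x ρ,
      dist (iteratedFDeriv ℝ k (u n) y) (iteratedFDeriv ℝ k (u n) x) ≤ ε / 4 := by
    intro n x hx y hy
    have hsub : Metric.ball x ρ ⊆ Metric.cthickening δ K :=
      (Metric.ball_subset_closedBall.trans (Metric.closedBall_subset_closedBall hρδ)).trans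
        (Metric.closedBall_subset_cthickening hx δ)
    have := (convex_ball x ρ).norm_image_sub_le_of_norm_fderiv_le (𝕜 := ℝ)
      (f := iteratedFDeriv ℝ k (u n)) (C := |C|)
      (fun z hz => ((hu n).contDiffAt (hΩ.mem_nhds (hδΩ (hsub hz)))).differentiableAt_iteratedFDeriv
        (by exact_mod_cast WithTop.coe_lt_top k))
      (fun z hz => by rw [norm_fderiv_iter]; exact (hC n z (hsub hz)).trans (le_abs_self C))
      (Metric.mem_ball_self hρ) hy
    rw [dist_eq_norm]
    refine this.trans (le_trans ?_ hρε)
    rw [← dist_eq_norm]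
    gcongr
    exact (Metric.mem_ball.1 hy).le
  -- finitely many points of the dense set are `ρ`-close to every point of `K`
  obtain ⟨t, ht, hcov⟩ := hK.elim_finite_subcover_image (b := T ∩ Ω)
    (c := fun d => Metric.ball d ρ) (fun d _ => Metric.isOpen_ball) (by
      intro x hx
      obtain ⟨d, ⟨hd1, hd2⟩, hd3⟩ := hT.inter_open_nonempty (Metric.ball x ρ ∩ Ω)
        (Metric.isOpen_ball.inter hΩ) ⟨x, Metric.mem_ball_self hρ, hKΩ hx⟩
      simp only [mem_iUnion]
      exact ⟨d, ⟨hd3, hd2⟩, Metric.mem_ball_comm.1 hd1⟩)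
  have hN : ∀ d ∈ t, ∀ᶠ N in atTop, ∀ m ≥ N, ∀ n ≥ N,
      dist (iteratedFDeriv ℝ k (u m) d) (iteratedFDeriv ℝ k (u n) d) < ε / 4 := by
    intro d hd
    obtain ⟨a, ha⟩ := hlim d (ht hd)
    obtain ⟨N, hN⟩ := Metric.cauchySeq_iff.1 ha.cauchySeq (ε / 4) (by positivity)
    filter_upwards [eventually_ge_atTop N] with N' hN' m hm n hn
    exact hN m (hN'.trans hm) n (hN'.trans hn)
  obtain ⟨N, hN⟩ := ((hcov.1.eventually_all).2 hN).exists
  refine ⟨N, fun m hm n hn x hx => ?_⟩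
  have hx' := hcov.2 hx
  simp only [mem_iUnion] at hx'
  obtain ⟨d, hd, hxd⟩ := hx'
  have h1 := hlip m x hx d (Metric.mem_ball_comm.1 hxd)
  have h2 := hlip n x hx d (Metric.mem_ball_comm.1 hxd)
  have h3 := hN d hd m hm n hn
  have h4 := dist_triangle4 (iteratedFDeriv ℝ k (u m) x) (iteratedFDeriv ℝ k (u m) d)
    (iteratedFDeriv ℝ k (u n) d) (iteratedFDeriv ℝ k (u n) x)
  rw [dist_comm] at h1
  linarith

/-- A sequence with all jets locally bounded has a subsequence converging in `C^∞` on compact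
subsets. -/
theorem smooth_compactness (hΩ : IsOpen Ω) (hu : ∀ n, ContDiffOn ℝ (⊤ : ℕ∞) (u n) Ω)
    (hb : JetsBounded Ω u) : ∃ φ : ℕ → ℕ, StrictMono φ ∧ ∃ v : ℝ × ℝ → ℝ,
      ContDiffOn ℝ (⊤ : ℕ∞) v Ω ∧ ∀ k : ℕ, ∀ K : Set (ℝ × ℝ), IsCompact K → K ⊆ Ω →
        TendstoUniformlyOn (fun n p => iteratedFDeriv ℝ k (u (φ n)) p)
          (iteratedFDeriv ℝ k v) atTop K := by
  obtain ⟨T, hTc, hT⟩ := TopologicalSpace.exists_countable_dense (ℝ × ℝ)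
  obtain ⟨φ, hφ, hlim⟩ := exists_subseq_pointwise hb (hTc.mono inter_subset_left)
    (inter_subset_right (s := T) (t := Ω))
  have hb' : JetsBounded Ω (fun n => u (φ n)) := fun k K hK hKΩ => by
    obtain ⟨C, hC⟩ := hb k K hK hKΩ
    exact ⟨C, fun n => hC (φ n)⟩
  have hcau : ∀ k, ∀ K : Set (ℝ × ℝ), IsCompact K → K ⊆ Ω →
      UniformCauchySeqOn (fun n => iteratedFDeriv ℝ k (u (φ n))) atTop K := fun k K hK hKΩ =>
    uniformCauchy hΩ (fun n => hu (φ n)) hb' hT k (hlim k) hK hKΩ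
  have hG : ∀ x : ℝ × ℝ, ∀ k, ∃ a : ContinuousMultilinearMap ℝ (fun _ : Fin k => ℝ × ℝ) ℝ,
      x ∈ Ω → Tendsto (fun n => iteratedFDeriv ℝ k (u (φ n)) x) atTop (nhds a) := by
    intro x k
    by_cases hx : x ∈ Ω
    · obtain ⟨a, ha⟩ := cauchySeq_tendsto_of_complete
        ((hcau k {x} isCompact_singleton (by simpa using hx)).cauchySeq rfl)
      exact ⟨a, fun _ => ha⟩
    · exact ⟨0, fun h => absurd h hx⟩
  choose G hG using hG
  have hunif : ∀ k, ∀ K : Set (ℝ × ℝ), IsCompact K → K ⊆ Ω →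
      TendstoUniformlyOn (fun n => iteratedFDeriv ℝ k (u (φ n))) (fun x => G x k) atTop K :=
    fun k K hK hKΩ => (hcau k K hK hKΩ).tendstoUniformlyOn_of_tendsto
      fun x hx => hG x k (hKΩ hx)
  have hder : ∀ k, ∀ x ∈ Ω, HasFDerivAt (fun x => G x k) (G x (k + 1)).curryLeft x := by
    intro k x hx
    have hloc := (tendstoLocallyUniformlyOn_iff_forall_isCompact hΩ).2
      fun K hKΩ hK => hunif (k + 1) K hK hKΩ
    have hloc' := (continuousMultilinearCurryLeftEquiv ℝ (fun _ : Fin (k + 1) => ℝ × ℝ)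
      ℝ).isometry.uniformContinuous.comp_tendstoLocallyUniformlyOn hloc
    refine hasFDerivAt_of_tendstoLocallyUniformlyOn hΩ hloc' (fun n y hy => ?_)
      (fun y hy => hG y k hy) hx
    rw [← fderiv_iteratedFDeriv]
    exact (((hu (φ n)).contDiffAt (hΩ.mem_nhds hy)).differentiableAt_iteratedFDeriv
        (by exact_mod_cast WithTop.coe_lt_top k)).hasFDerivAt
  have htay : HasFTaylorSeriesUpToOn ((⊤ : ℕ∞) : WithTop ℕ∞) (fun x => (G x 0).curry0)
      (fun x k => G x k) Ω :=
    ⟨fun x _ => rfl, fun m _ x hx => (hder m x hx).hasFDerivWithinAt,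
      fun m _ x hx => (hder m x hx).continuousAt.continuousWithinAt⟩
  refine ⟨φ, hφ, fun x => (G x 0).curry0, htay.contDiffOn, fun k K hK hKΩ => ?_⟩
  refine (hunif k K hK hKΩ).congr_right fun x hx => ?_
  rw [← iteratedFDerivWithin_of_isOpen k hΩ (hKΩ hx)]
  exact htay.eq_iteratedFDerivWithin_of_uniqueDiffOn (by exact_mod_cast le_top) hΩ.uniqueDiffOn
    (hKΩ hx)
end Compactness

end Subsequence

/-! ### Sequences of solutions as jets -/

section Solutions

open TopologicalSpace

variable {Ω : Opens (ℝ × ℝ)} {H : ℝ}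

lemma fderiv_famExt (f : SmoothFam Ω) (n : ℕ) (x : ℝ × ℝ) (hx : x ∈ Ω) :
    fderiv ℝ (famExt Ω f.1 n) x =
      (ContinuousLinearMap.toSpanSingleton ℝ (ContinuousLinearMap.fst ℝ ℝ ℝ) ∘ famExt Ω (dX f).1 n +
      ContinuousLinearMap.toSpanSingleton ℝ (ContinuousLinearMap.snd ℝ ℝ ℝ) ∘
        famExt Ω (dY f).1 n) x := by
  have h1 := famExt_dirDer (1, 0) f n hx
  have h2 := famExt_dirDer (0, 1) f n hx
  refine ContinuousLinearMap.ext fun v => ?_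
  have hv : v = v.1 • (1, 0) + v.2 • ((0, 1) : ℝ × ℝ) := by ext <;> simp
  simp only [Pi.add_apply, Function.comp_apply, add_apply,
    ContinuousLinearMap.toSpanSingleton_apply, smul_apply, smul_eq_mul,
    ContinuousLinearMap.coe_fst', ContinuousLinearMap.coe_snd', dX, dY, h1, h2]
  conv_lhs => rw [hv]
  simp only [map_add, map_smul, smul_eq_mul]
  ring

/-- Bounds on iterated partial derivatives give bounds on `iteratedFDeriv`. -/
lemma jetsBounded_of_locBddDer (k : ℕ) : ∀ f : SmoothFam Ω, LocBddDer k f →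
    ∀ K : Set (ℝ × ℝ), IsCompact K → K ⊆ Ω →
    ∃ C, ∀ n, ∀ x ∈ K, ‖iteratedFDeriv ℝ k (famExt Ω f.1 n) x‖ ≤ C := by
  induction k with
  | zero =>
    intro f hf K hK hKΩ
    obtain ⟨C, hC⟩ := hf K hK hKΩ
    refine ⟨C, fun n x hx => ?_⟩
    rw [norm_iteratedFDeriv_zero, Real.norm_eq_abs]
    have hxΩ : x ∈ Ω := hKΩ hx
    have h := hC n ⟨x, hxΩ⟩ hx
    rw [evAt_apply, ← famExt_of_mem f.1 n ⟨x, hxΩ⟩] at h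
    exact h
  | succ k ih =>
    rintro f ⟨-, hx, hy⟩ K hK hKΩ
    obtain ⟨C, hC⟩ := ih _ hx K hK hKΩ
    obtain ⟨D, hD⟩ := ih _ hy K hK hKΩ
    refine ⟨‖ContinuousLinearMap.toSpanSingleton ℝ (ContinuousLinearMap.fst ℝ ℝ ℝ)‖ * C +
      ‖ContinuousLinearMap.toSpanSingleton ℝ (ContinuousLinearMap.snd ℝ ℝ ℝ)‖ * D,
      fun n x hxK => ?_⟩
    have hxΩ := hKΩ hxK
    have hev : fderiv ℝ (famExt Ω f.1 n) =ᶠ[nhds x]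
      (ContinuousLinearMap.toSpanSingleton ℝ (ContinuousLinearMap.fst ℝ ℝ ℝ) ∘ famExt Ω (dX f).1 n +
      ContinuousLinearMap.toSpanSingleton ℝ (ContinuousLinearMap.snd ℝ ℝ ℝ) ∘
        famExt Ω (dY f).1 n) := by
      filter_upwards [Ω.isOpen.mem_nhds hxΩ] with y hy using fderiv_famExt f n y hy
    have hcX : ContDiffAt ℝ k (famExt Ω (dX f).1 n) x :=
      (SmoothFam.contDiffAt (dX f) n ⟨x, hxΩ⟩).of_le (by exact_mod_cast le_top)
    have hcY : ContDiffAt ℝ k (famExt Ω (dY f).1 n) x :=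
      (SmoothFam.contDiffAt (dY f) n ⟨x, hxΩ⟩).of_le (by exact_mod_cast le_top)
    rw [← norm_iteratedFDeriv_fderiv, (hev.iteratedFDeriv ℝ k).eq_of_nhds,
      iteratedFDeriv_add_apply (hcX.continuousLinearMap_comp _) (hcY.continuousLinearMap_comp _)]
    refine (norm_add_le _ _).trans (add_le_add ?_ ?_)
    · exact (ContinuousLinearMap.norm_iteratedFDeriv_comp_left _ hcX le_rfl).trans
        (mul_le_mul_of_nonneg_left (hC n x hxK) (norm_nonneg _))
    · exact (ContinuousLinearMap.norm_iteratedFDeriv_comp_left _ hcY le_rfl).trans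
        (mul_le_mul_of_nonneg_left (hD n x hxK) (norm_nonneg _))

section Final
variable {U : Set (ℝ × ℝ)}

lemma contDiffOn_pd (hU : IsOpen U) {f : ℝ × ℝ → ℝ} (hf : ContDiffOn ℝ (⊤ : ℕ∞) f U) :
    ContDiffOn ℝ (⊤ : ℕ∞) (pdx f) U ∧ ContDiffOn ℝ (⊤ : ℕ∞) (pdy f) U := by
  have h := hf.fderiv_of_isOpen hU (m := (⊤ : ℕ∞)) (by norm_cast)
  exact ⟨h.clm_apply contDiffOn_const, h.clm_apply contDiffOn_const⟩

lemma Wgraph_pos (f : ℝ × ℝ → ℝ) (x : ℝ × ℝ) : 0 < Wgraph f x :=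
  Real.sqrt_pos.2 (by positivity)

lemma Wgraph_sq (f : ℝ × ℝ → ℝ) (x : ℝ × ℝ) : Wgraph f x ^ 2 = 1 + pdx f x ^ 2 + pdy f x ^ 2 :=
  Real.sq_sqrt (by positivity)

lemma Wgraph_cube (f : ℝ × ℝ → ℝ) (x : ℝ × ℝ) :
    (1 + pdx f x ^ 2 + pdy f x ^ 2) ^ ((3 : ℝ) / 2) = Wgraph f x ^ 3 := by
  rw [← Wgraph_sq, ← Real.rpow_natCast (Wgraph f x) 2, ← Real.rpow_mul (Wgraph_pos f x).le,
    ← Real.rpow_natCast (Wgraph f x) 3]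
  norm_num

lemma contDiffOn_Wgraph (hU : IsOpen U) {f : ℝ × ℝ → ℝ} (hf : ContDiffOn ℝ (⊤ : ℕ∞) f U) :
    ContDiffOn ℝ (⊤ : ℕ∞) (Wgraph f) U := by
  obtain ⟨h1, h2⟩ := contDiffOn_pd hU hf
  exact ContDiffOn.sqrt ((contDiffOn_const.add (h1.pow 2)).add (h2.pow 2))
    fun x _ => by positivity

/-- A uniformly bounded sequence of solutions has all its jets locally bounded. -/
lemma cmc_jetsBounded (hH : 0 < H) (u : ℕ → ℝ × ℝ → ℝ)
    (hu : ∀ n, IsSmoothCMCSolution H Ω (u n)) (M : ℝ) (hbd : ∀ n, ∀ p ∈ Ω, |u n p| ≤ M) :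
    JetsBounded Ω u := by
  have hs := fun n => (hu n).1
  have hsx := fun n => (contDiffOn_pd Ω.isOpen (hs n)).1
  have hsy := fun n => (contDiffOn_pd Ω.isOpen (hs n)).2
  have hsW := fun n => contDiffOn_Wgraph Ω.isOpen (hs n)
  have hsν : ∀ n, ContDiffOn ℝ (⊤ : ℕ∞) (fun x => (Wgraph (u n) x)⁻¹) Ω := fun n =>
    (hsW n).inv fun x _ => (Wgraph_pos (u n) x).ne'
  have ex : dX (SmoothFam.of (Ω := Ω) u hs) = SmoothFam.of (fun n => pdx (u n)) hsx :=
    SmoothFam.ext_ev fun n x => dirDer_of (1, 0) u hs n x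
  have ey : dY (SmoothFam.of (Ω := Ω) u hs) = SmoothFam.of (fun n => pdy (u n)) hsy :=
    SmoothFam.ext_ev fun n x => dirDer_of (0, 1) u hs n x
  have hj : IsCMCJet (R := SmoothFam Ω) H dX dY (SmoothFam.of u hs)
      (SmoothFam.of (fun n => Wgraph (u n)) hsW) (SmoothFam.of _ hsν) := by
    refine ⟨dX_dY_comm, ?_, ?_, ?_⟩
    · rw [ex, ey]
      refine SmoothFam.ext_ev fun n x => ?_
      simp only [map_add, map_pow, map_one, evAt_apply, SmoothFam.of_apply]
      exact Wgraph_sq (u n) x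
    · refine SmoothFam.ext_ev fun n x => ?_
      simp only [map_mul, map_one, evAt_apply, SmoothFam.of_apply]
      exact mul_inv_cancel₀ (Wgraph_pos (u n) x).ne'
    · rw [ex, ey]
      refine SmoothFam.ext_ev fun n x => ?_
      have h1 := dirDer_of (Ω := Ω) (1, 0) (fun n => pdx (u n)) hsx n x
      have h2 := dirDer_of (Ω := Ω) (0, 1) (fun n => pdx (u n)) hsx n x
      have h3 := dirDer_of (Ω := Ω) (0, 1) (fun n => pdy (u n)) hsy n x
      simp only [map_add, map_sub, map_mul, map_smul, map_pow, map_one, map_ofNat, smul_eq_mul,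
        dX, dY, h1, h2, h3]
      simp only [evAt_apply, SmoothFam.of_apply]
      have := (hu n).2 x x.2
      rw [Wgraph_cube] at this
      rw [← this]
      have e1 : pdx (fun q => pdx (u n) q) (x : ℝ × ℝ) = fderiv ℝ (pdx (u n)) x (1, 0) := rfl
      have e2 : pdy (fun q => pdx (u n) q) (x : ℝ × ℝ) = fderiv ℝ (pdx (u n)) x (0, 1) := rfl
      have e3 : pdy (fun q => pdy (u n) q) (x : ℝ × ℝ) = fderiv ℝ (pdy (u n)) x (0, 1) := rfl
      rw [e1, e2, e3]
      ring
  have hest := interior_estimates hH hj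
    (fun n x => by rw [evAt_apply, SmoothFam.of_apply]; exact Wgraph_pos (u n) x)
    (M := M) (fun n x => by rw [evAt_apply, SmoothFam.of_apply]; exact hbd n x x.2)
  intro k K hK hKΩ
  obtain ⟨C, hC⟩ := jetsBounded_of_locBddDer k _ (hest k) K hK hKΩ
  refine ⟨C, fun n x hx => ?_⟩
  have he : famExt Ω (SmoothFam.of (Ω := Ω) u hs).1 n =ᶠ[nhds x] u n :=
    (famExt_restrict u n).eventuallyEq_of_mem (Ω.isOpen.mem_nhds (hKΩ hx))
  have := hC n x hx
  rwa [(he.iteratedFDeriv ℝ k).eq_of_nhds] at this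

end Final

end Solutions

/-! ### Passage to the limit -/


/-- Iterated directional derivatives in terms of the second iterated derivative. -/
lemma second_pd_apply {U : Set (ℝ × ℝ)} (hU : IsOpen U) {f : ℝ × ℝ → ℝ}
    (hf : ContDiffOn ℝ (⊤ : ℕ∞) f U) {p : ℝ × ℝ} (hp : p ∈ U) (a b : ℝ × ℝ) :
    fderiv ℝ (fun q => fderiv ℝ f q a) p b = iteratedFDeriv ℝ 2 f p ![b, a] := by
  have hd : DifferentiableAt ℝ (fderiv ℝ f) p :=
    ((hf.fderiv_of_isOpen hU (m := (⊤ : ℕ∞)) (by norm_cast)).differentiableOn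
      (by simp)).differentiableAt (hU.mem_nhds hp)
  rw [iteratedFDeriv_two_apply, fderiv_clm_apply hd (differentiableAt_const a)]
  simp

/-- The equation is closed under pointwise convergence of the 2-jets. -/
lemma isSmoothCMCSolution_of_tendsto {H : ℝ} {Ω : Set (ℝ × ℝ)} (hΩ : IsOpen Ω)
    {u : ℕ → ℝ × ℝ → ℝ} {v : ℝ × ℝ → ℝ} (hu : ∀ n, IsSmoothCMCSolution H Ω (u n))
    (hv : ContDiffOn ℝ (⊤ : ℕ∞) v Ω)
    (hlim : ∀ k : ℕ, ∀ p ∈ Ω,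
      Tendsto (fun n => iteratedFDeriv ℝ k (u n) p) atTop (nhds (iteratedFDeriv ℝ k v p))) :
    IsSmoothCMCSolution H Ω v := by
  refine ⟨hv, fun p hp => ?_⟩
  have h1 : ∀ a : ℝ × ℝ, Tendsto (fun n => fderiv ℝ (u n) p a) atTop
      (nhds (fderiv ℝ v p a)) := fun a => by
    have := ((ContinuousMultilinearMap.apply ℝ (fun _ : Fin 1 => ℝ × ℝ) ℝ
      ![a]).continuous.tendsto _).comp (hlim 1 p hp)
    simpa [Function.comp_def, iteratedFDeriv_one_apply] using this
  have h2 : ∀ a b : ℝ × ℝ, Tendsto (fun n => fderiv ℝ (fun q => fderiv ℝ (u n) q a) p b) atTop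
      (nhds (fderiv ℝ (fun q => fderiv ℝ v q a) p b)) := fun a b => by
    have := ((ContinuousMultilinearMap.apply ℝ (fun _ : Fin 2 => ℝ × ℝ) ℝ
      ![b, a]).continuous.tendsto _).comp (hlim 2 p hp)
    rw [second_pd_apply hΩ hv hp]
    simp only [fun n => second_pd_apply hΩ (hu n).1 hp]
    exact this
  have hx := h1 (1, 0)
  have hy := h1 (0, 1)
  have hL := ((((hy.pow 2).const_add 1).mul (h2 (1, 0) (1, 0))).sub
    (((hx.const_mul 2).mul hy).mul (h2 (1, 0) (0, 1)))).add
    (((hx.pow 2).const_add 1).mul (h2 (0, 1) (0, 1)))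
  have hR := (((((hx.pow 2).const_add 1).add (hy.pow 2)).rpow_const
    (p := (3 : ℝ) / 2) (Or.inr (by norm_num)))).const_mul (2 * H)
  exact tendsto_nhds_unique hL (hR.congr fun n => ((hu n).2 p hp).symm)

/-- a uniformly bounded sequence of solutions of (CMC) has a subsequence
converging, in C^k on every compact subset for every k, to a solution. -/
theorem stmt_1 (H : ℝ) (hH : 0 < H) (Ω : Set (ℝ × ℝ)) (hΩ : IsOpen Ω)
    (hΩconn : IsConnected Ω) (u : ℕ → ℝ × ℝ → ℝ)
    (hu : ∀ n, IsSmoothCMCSolution H Ω (u n))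
    (M : ℝ) (hbd : ∀ n, ∀ p ∈ Ω, |u n p| ≤ M) :
    ∃ φ : ℕ → ℕ, StrictMono φ ∧ ∃ v : ℝ × ℝ → ℝ, IsSmoothCMCSolution H Ω v ∧
      ∀ k : ℕ, ∀ K : Set (ℝ × ℝ), IsCompact K → K ⊆ Ω →
        TendstoUniformlyOn (fun n p => iteratedFDeriv ℝ k (u (φ n)) p)
          (iteratedFDeriv ℝ k v) atTop K := by
  obtain ⟨φ, hφ, v, hv, hconv⟩ := smooth_compactness hΩ (fun n => (hu n).1)
    (cmc_jetsBounded (Ω := ⟨Ω, hΩ⟩) hH u hu M hbd)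
  refine ⟨φ, hφ, v, isSmoothCMCSolution_of_tendsto hΩ (fun n => hu (φ n)) hv
    fun k p hp => ?_, hconv⟩
  exact (hconv k {p} isCompact_singleton (by simpa using hp)).tendsto_at rfl
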